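/- Let Σ be a non-singular fan in ℝ^n satisfying conditions (2.9.1) and (2.9.2) (so that X_Σ = U(K_Σ)/G_Σ is simply connected), and let D = (d_1,…,d_r) be an r-tuple of positive integers with ∑_k d_k n_k = 0. Then the map i_D : Pol*_D(S¹,X_Σ) → ΩX_Σ admits a continuous lift j_D : Pol*_D(S¹,X_Σ) → ΩU(K_Σ) with (Ωq_Σ) ∘ j_D = i_D, and every such lift j_D is a homotopy equivalence through dimension d(D,Σ) = 2(r_min(Σ)−1)·d_min − 2. -/

import Mathlib

open scoped BigOperators
attribute [local instance] Classical.propDecidable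

noncomputable section

namespace Toric


/-! ### Cones and fans -/

/-- The real vector associated to an integer vector. -/
def zr {n : ℕ} (v : Fin n → ℤ) : Fin n → ℝ := fun i => (v i : ℝ)

/-- A convex rational polyhedral cone in `ℝ^n`. -/
def IsRatCone {n : ℕ} (σ : Set (Fin n → ℝ)) : Prop :=
  ∃ s : Finset (Fin n → ℤ),
    σ = {x | ∃ lam : (Fin n → ℤ) → ℝ, (∀ v, 0 ≤ lam v) ∧ x = ∑ v ∈ s, lam v • zr v}

/-- A cone is strongly convex if `σ ∩ (-σ) = {0}`. -/
def StronglyConvex {n : ℕ} (σ : Set (Fin n → ℝ)) : Prop := σ ∩ (-σ) = {0}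

/-- `τ` is a face of `σ`, cut out by a linear form nonnegative on `σ`. -/
def IsFaceOf {n : ℕ} (τ σ : Set (Fin n → ℝ)) : Prop :=
  ∃ L : (Fin n → ℝ) →ₗ[ℝ] ℝ, (∀ x ∈ σ, 0 ≤ L x) ∧ τ = σ ∩ {x | L x = 0}

/-- A fan in `ℝ^n`: a finite collection of strongly convex rational polyhedral cones,
closed under taking faces, such that the intersection of two cones is a face of each;
we also require that it strictly contains `{0}`. -/
structure Fan (n : ℕ) where
  cones : Set (Set (Fin n → ℝ))
  finite : cones.Finite
  ratCone : ∀ σ ∈ cones, IsRatCone σ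
  stronglyConvex : ∀ σ ∈ cones, StronglyConvex σ
  face_mem : ∀ σ ∈ cones, ∀ τ, IsFaceOf τ σ → τ ∈ cones
  inter_face : ∀ σ ∈ cones, ∀ τ ∈ cones, IsFaceOf (σ ∩ τ) σ
  zero_mem : ({0} : Set (Fin n → ℝ)) ∈ cones
  nontrivial : cones ≠ {({0} : Set (Fin n → ℝ))}

/-- A fan is complete if its cones cover `ℝ^n`. -/
def Fan.Complete {n : ℕ} (F : Fan n) : Prop := ⋃₀ F.cones = Set.univ

/-- A fan is non-singular if each of its cones is spanned by part of a `ℤ`-basis of `ℤ^n`. -/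
def Fan.NonSingular {n : ℕ} (F : Fan n) : Prop :=
  ∀ σ ∈ F.cones, ∃ (b : Module.Basis (Fin n) ℤ (Fin n → ℤ)) (s : Finset (Fin n)),
    σ = {x | ∃ lam : Fin n → ℝ, (∀ i, 0 ≤ lam i) ∧ x = ∑ i ∈ s, lam i • zr (b i)}

/-- The ray (one-dimensional cone) generated by a vector. -/
def ray {n : ℕ} (v : Fin n → ℝ) : Set (Fin n → ℝ) := {x | ∃ t : ℝ, 0 ≤ t ∧ x = t • v}

/-- The cone spanned by the vectors `n_i`, `i ∈ s`. -/
def coneIdx {n r : ℕ} (N : Fin r → Fin n → ℤ) (s : Finset (Fin r)) : Set (Fin n → ℝ) :=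
  {x | ∃ lam : Fin r → ℝ, (∀ i, 0 ≤ lam i) ∧ x = ∑ i ∈ s, lam i • zr (N i)}

/-- A point of `ℝ^n` lying in the lattice `ℤ^n`. -/
def IsLatticePoint {n : ℕ} (x : Fin n → ℝ) : Prop := ∀ i, ∃ m : ℤ, x i = (m : ℝ)

/-- `N 1, …, N r` is the (complete, repetition-free) list of primitive generators of the
one-dimensional cones of the fan `F`. -/
structure IsPrimGens {n r : ℕ} (F : Fan n) (N : Fin r → Fin n → ℤ) : Prop where
  ray_mem : ∀ k, ray (zr (N k)) ∈ F.cones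
  ne_zero : ∀ k, N k ≠ 0
  primitive : ∀ k, ray (zr (N k)) ∩ {x | IsLatticePoint x}
      = {x | ∃ c : ℕ, x = (c : ℝ) • zr (N k)}
  inj : Function.Injective N
  complete : ∀ σ ∈ F.cones, Module.finrank ℝ (Submodule.span ℝ σ) = 1 →
      ∃ k, σ = ray (zr (N k))

/-- Condition (2.9.1): a positive integral relation among the primitive generators. -/
def Cond1 {n r : ℕ} (N : Fin r → Fin n → ℤ) : Prop :=
  ∃ d : Fin r → ℕ, (∀ k, 0 < d k) ∧ ∑ k, (d k : ℤ) • N k = 0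

/-- Condition (2.9.2): the primitive generators span `ℤ^n` over `ℤ`. -/
def Cond2 {n r : ℕ} (N : Fin r → Fin n → ℤ) : Prop :=
  Submodule.span ℤ (Set.range N) = ⊤

/-- The underlying simplicial complex `K_Σ` of a fan. -/
def KC {n r : ℕ} (F : Fan n) (N : Fin r → Fin n → ℤ) : Set (Finset (Fin r)) :=
  {s | coneIdx N s ∈ F.cones}

/-- A primitive set: it spans no cone of the fan, but every proper subset does. -/
def PrimitiveSet {r : ℕ} (K : Set (Finset (Fin r))) (s : Finset (Fin r)) : Prop :=
  s ∉ K ∧ ∀ t ⊂ s, t ∈ K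

/-- `r_min`: the minimal cardinality of a primitive set. -/
def rmin {r : ℕ} (K : Set (Finset (Fin r))) : ℕ :=
  sInf {m | ∃ s : Finset (Fin r), PrimitiveSet K s ∧ s.card = m}

/-- `d_min = min {d_1, …, d_r}`. -/
def dmin {r : ℕ} (D : Fin r → ℕ) : ℕ := sInf (Set.range D)

/-- The stability dimension `d(D,Σ) = 2(r_min − 1) d_min − 2`. -/
def dBound {r : ℕ} (K : Set (Finset (Fin r))) (D : Fin r → ℕ) : ℤ :=
  2 * ((rmin K : ℤ) - 1) * (dmin D : ℤ) - 2

/-- The connectivity bound `C_D(Σ) = 2(r_min − 1) d_min − 1`. -/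
def CBound {r : ℕ} (K : Set (Finset (Fin r))) (D : Fin r → ℕ) : ℤ :=
  2 * ((rmin K : ℤ) - 1) * (dmin D : ℤ) - 1

/-! ### Coordinate subspaces, `U(K)`, `G_Σ` and the toric quotient -/

/-- The coordinate subspace `L_σ ⊆ ℂ^r`. -/
def LSub {r : ℕ} (σ : Finset (Fin r)) : Set (Fin r → ℂ) := {x | ∀ i ∈ σ, x i = 0}

/-- The complement `U(K)` of the coordinate subspace arrangement of type `K`. -/
def UK {r : ℕ} (K : Set (Finset (Fin r))) : Set (Fin r → ℂ) :=
  (⋃ σ ∈ {s : Finset (Fin r) | s ∉ K}, LSub σ)ᶜ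

lemma mem_UK {r : ℕ} {K : Set (Finset (Fin r))} {x : Fin r → ℂ} :
    x ∈ UK K ↔ ∀ σ : Finset (Fin r), σ ∉ K → ∃ i ∈ σ, x i ≠ 0 := by
  constructor
  · intro h σ hσ
    by_contra hc
    push_neg at hc
    exact h (Set.mem_biUnion hσ (fun i hi => hc i hi))
  · intro h hx
    rcases Set.mem_iUnion₂.1 hx with ⟨σ, hσ, hxσ⟩
    rcases h σ hσ with ⟨i, hi, hne⟩
    exact hne (hxσ i hi)

/-- The group `G_Σ` (as a subset of `ℂ^r`). -/
def GSet {n r : ℕ} (N : Fin r → Fin n → ℤ) : Set (Fin r → ℂ) :=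
  {μ | (∀ k, μ k ≠ 0) ∧ ∀ m : Fin n → ℤ, ∏ k, μ k ^ (∑ j, N k j * m j) = 1}

/-- The orbit relation of the `G_Σ`-action on `U(K_Σ)`. -/
def toricRel {n r : ℕ} (N : Fin r → Fin n → ℤ) (K : Set (Finset (Fin r)))
    (x y : ↥(UK K)) : Prop :=
  ∃ μ ∈ GSet N, (fun i => μ i * (x : Fin r → ℂ) i) = (y : Fin r → ℂ)

/-- The toric variety `X_Σ = U(K_Σ)/G_Σ`, as a topological quotient. -/
def XS {n r : ℕ} (N : Fin r → Fin n → ℤ) (K : Set (Finset (Fin r))) : Type :=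
  Quot (toricRel N K)

instance {n r : ℕ} (N : Fin r → Fin n → ℤ) (K : Set (Finset (Fin r))) :
    TopologicalSpace (XS N K) :=
  instTopologicalSpaceQuot

/-- The quotient map `q_Σ : U(K_Σ) → X_Σ`. -/
def qmap {n r : ℕ} (N : Fin r → Fin n → ℤ) (K : Set (Finset (Fin r))) :
    ↥(UK K) → XS N K :=
  Quot.mk (toricRel N K)

/-- `q_Σ` as a continuous map. -/
def qCont {n r : ℕ} (N : Fin r → Fin n → ℤ) (K : Set (Finset (Fin r))) :
    C(↥(UK K), XS N K) :=
  ⟨qmap N K, continuous_quot_mk⟩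

lemma coneIdx_empty {n r : ℕ} (N : Fin r → Fin n → ℤ) :
    coneIdx N (∅ : Finset (Fin r)) = ({0} : Set (Fin n → ℝ)) := by
  ext x
  constructor
  · rintro ⟨lam, -, hx⟩
    simpa using hx
  · intro hx
    exact ⟨0, fun i => le_refl 0, by simpa using hx⟩

lemma empty_mem_KC {n r : ℕ} (F : Fan n) (N : Fin r → Fin n → ℤ) :
    (∅ : Finset (Fin r)) ∈ KC F N := by
  show coneIdx N ∅ ∈ F.cones
  rw [coneIdx_empty]
  exact F.zero_mem

/-- The point `(1,…,1)`. -/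
def onesC {r : ℕ} : Fin r → ℂ := fun _ => 1

lemma ones_mem_UK {r : ℕ} {K : Set (Finset (Fin r))} (h : (∅ : Finset (Fin r)) ∈ K) :
    (onesC : Fin r → ℂ) ∈ UK K := by
  rw [mem_UK]
  intro σ hσ
  rcases Finset.nonempty_iff_ne_empty.2 (fun he : σ = ∅ => hσ (by rw [he]; exact h)) with ⟨i, hi⟩
  exact ⟨i, hi, one_ne_zero⟩

/-- The base point `(1,…,1)` of `U(K_Σ)`. -/
def onesUK {r : ℕ} {K : Set (Finset (Fin r))} (h : (∅ : Finset (Fin r)) ∈ K) : ↥(UK K) :=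
  ⟨onesC, ones_mem_UK h⟩

/-- The base point `[1,…,1]` of `X_Σ`. -/
def baseX {n r : ℕ} (N : Fin r → Fin n → ℤ) (K : Set (Finset (Fin r)))
    (h : (∅ : Finset (Fin r)) ∈ K) : XS N K :=
  qmap N K (onesUK h)



/-! ### Spaces of tuples of monic polynomials -/

/-- The monic polynomial `z^d + a_{d-1} z^{d-1} + ⋯ + a_0` with coefficient data `a`. -/
def toPoly {d : ℕ} (a : Fin d → ℂ) : Polynomial ℂ :=
  Polynomial.X ^ d + ∑ i : Fin d, Polynomial.C (a i) * Polynomial.X ^ (i : ℕ)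

/-- The space `Pol*_D(S¹, X_Σ)` of `r`-tuples of monic polynomials of multidegree `D`
(in coefficient coordinates) such that for every `σ ∉ K` the polynomials `{f_i : i ∈ σ}`
have no common real root. -/
def PolSp {r : ℕ} (K : Set (Finset (Fin r))) (D : Fin r → ℕ) :
    Set (∀ k : Fin r, Fin (D k) → ℂ) :=
  {f | ∀ σ : Finset (Fin r), σ ∉ K → ∀ t : ℝ,
        ∃ k ∈ σ, (toPoly (f k)).eval (t : ℂ) ≠ 0}

lemma polEval_mem_UK {r : ℕ} {K : Set (Finset (Fin r))} {D : Fin r → ℕ}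
    (f : ↥(PolSp K D)) (t : ℝ) :
    (fun k => (toPoly (f.1 k)).eval (t : ℂ)) ∈ UK K :=
  mem_UK.2 fun σ hσ => f.2 σ hσ t

/-! ### Loop spaces and induced maps on homotopy groups -/

/-- The loop space `Ω X = Map*(S¹, X)` with `S¹ = ℝ ∪ {∞}` (the one-point
compactification of `ℝ`), based at `x₀`. -/
def Loop (X : Type*) [TopologicalSpace X] (x₀ : X) : Type _ :=
  {γ : C(OnePoint ℝ, X) // γ OnePoint.infty = x₀}

instance {X : Type*} [TopologicalSpace X] (x₀ : X) : TopologicalSpace (Loop X x₀) :=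
  instTopologicalSpaceSubtype

/-- The constant loop, base point of `Ω X`. -/
def Loop.const {X : Type*} [TopologicalSpace X] (x₀ : X) : Loop X x₀ :=
  ⟨ContinuousMap.const _ x₀, rfl⟩

/-- A based continuous map induces a continuous map of loop spaces. -/
def loopMap {X Y : Type*} [TopologicalSpace X] [TopologicalSpace Y] {x₀ : X} {y₀ : Y}
    (f : C(X, Y)) (hf : f x₀ = y₀) : C(Loop X x₀, Loop Y y₀) where
  toFun γ := ⟨f.comp γ.1, by simp [γ.2, hf]⟩
  continuous_toFun := by
    apply Continuous.subtype_mk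
    exact (ContinuousMap.continuous_postcomp f).comp continuous_subtype_val

/-- The map induced by a continuous map on homotopy groups (`π_q`). -/
def piMap (q : ℕ) {X Y : Type*} [TopologicalSpace X] [TopologicalSpace Y]
    (f : C(X, Y)) (x : X) :
    HomotopyGroup (Fin q) X x → HomotopyGroup (Fin q) Y (f x) :=
  Quotient.map
    (fun p => ⟨f.comp p.1, fun y hy => by
      show f (p.1 y) = f x
      rw [p.2 y hy]⟩)
    (fun p₁ p₂ h => h.elim fun H => ⟨H.compContinuousMap f⟩)

/-- `f` is a homotopy equivalence through dimension `d`: it induces isomorphisms on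
`π_k` for all `k ≤ d` (at every base point). -/
def HomotopyEquivThrough {X Y : Type*} [TopologicalSpace X] [TopologicalSpace Y]
    (f : C(X, Y)) (d : ℤ) : Prop :=
  ∀ (x : X) (k : ℕ), (k : ℤ) ≤ d → Function.Bijective (piMap k f x)

/-- A genuine homotopy equivalence. -/
def IsHtpyEquiv {X Y : Type*} [TopologicalSpace X] [TopologicalSpace Y]
    (f : C(X, Y)) : Prop :=
  ∃ g : C(Y, X), (f.comp g).Homotopic (ContinuousMap.id Y) ∧
    (g.comp f).Homotopic (ContinuousMap.id X)

/-! ### `i_D`, lifts, and stabilization maps -/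

/-- `j : Pol*_D → Ω U(K_Σ)` is a lift of `i_D` through `Ω q_Σ`, i.e. `Ω q_Σ ∘ j = i_D`:
for every tuple `f` and real `t`, the loop `j f` at time `t` lies over the point
`[f_1(t), …, f_r(t)]` of `X_Σ` (and at `∞` over `[1,…,1]`, automatically). -/
def IsLiftOfID {n r : ℕ} (N : Fin r → Fin n → ℤ) (K : Set (Finset (Fin r)))
    (hE : (∅ : Finset (Fin r)) ∈ K) (D : Fin r → ℕ)
    (j : ↥(PolSp K D) → Loop ↥(UK K) (onesUK hE)) : Prop :=
  ∀ (f : ↥(PolSp K D)) (t : ℝ),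
    qmap N K ((j f).1 (t : OnePoint ℝ)) =
      qmap N K ⟨fun k => (toPoly (f.1 k)).eval (t : ℂ), polEval_mem_UK f t⟩

/-- `i : Pol*_D → Ω X_Σ` is the map `i_D` given by evaluation. -/
def IsID {n r : ℕ} (N : Fin r → Fin n → ℤ) (K : Set (Finset (Fin r)))
    (hE : (∅ : Finset (Fin r)) ∈ K) (D : Fin r → ℕ)
    (i : ↥(PolSp K D) → Loop (XS N K) (baseX N K hE)) : Prop :=
  ∀ (f : ↥(PolSp K D)) (t : ℝ),
    (i f).1 (t : OnePoint ℝ) =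
      qmap N K ⟨fun k => (toPoly (f.1 k)).eval (t : ℂ), polEval_mem_UK f t⟩

/-- `φ` is an admissible parameter for the stabilization maps: a homeomorphism of `ℂ`
onto the half plane `{Re < bound}` carrying `ℝ` onto `(-∞, bound)`. -/
def AdmissiblePhi (bound : ℝ) (φ : ℂ → ℂ) : Prop :=
  Continuous φ ∧ Function.Injective φ ∧ IsOpenMap φ ∧
    Set.range φ = {w : ℂ | w.re < bound} ∧
    φ '' {z : ℂ | z.im = 0} = {z : ℂ | z.im = 0 ∧ z.re < bound}

/-- The defining property of the stabilization map
`s_{D,D'}(f)_k = φ(f_k) · (z - x_k)^{d'_k - d_k}`, where `φ(f)` denotes the monic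
polynomial whose roots are the images under `φ` of the roots of `f`. -/
def StabSpec {r : ℕ} (K : Set (Finset (Fin r))) (φ : ℂ → ℂ) (xpt : Fin r → ℂ)
    (D D' : Fin r → ℕ) (s : ↥(PolSp K D) → ↥(PolSp K D')) : Prop :=
  ∀ (f : ↥(PolSp K D)) (k : Fin r),
    toPoly ((s f).1 k) =
      (((toPoly (f.1 k)).roots.map φ).map
        fun α => Polynomial.X - Polynomial.C α).prod
        * (Polynomial.X - Polynomial.C (xpt k)) ^ (D' k - D k)

/-- The general defining property of the map `j_D : Pol*_D → Ω U(K_Σ)`: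
when `∑ d_k n_k = 0` it is a lift of `i_D` through `Ω q_Σ`, and otherwise it is the
composite `j_{D₀} ∘ s_{D,D₀}` for a suitable `D₀ = m₀ D*` as in condition (2.9.1). -/
def IsJD {n r : ℕ} (N : Fin r → Fin n → ℤ) (K : Set (Finset (Fin r)))
    (hE : (∅ : Finset (Fin r)) ∈ K) (D : Fin r → ℕ)
    (j : C(↥(PolSp K D), Loop ↥(UK K) (onesUK hE))) : Prop :=
  ((∑ k, (D k : ℤ) • N k = 0) ∧ IsLiftOfID N K hE D j) ∨
  ((∑ k, (D k : ℤ) • N k ≠ 0) ∧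
    ∃ (dstar : Fin r → ℕ) (m₀ : ℕ),
      (∀ k, 0 < dstar k) ∧ (∑ k, (dstar k : ℤ) • N k = 0) ∧
      (∀ k, D k < m₀ * dstar k) ∧
      ∃ (φ : ℂ → ℂ) (xpt : Fin r → ℂ),
        AdmissiblePhi ((∑ k, D k : ℕ) : ℝ) φ ∧
        (∀ k, ((∑ k, D k : ℕ) : ℝ) < (xpt k).re) ∧ Function.Injective xpt ∧
        ∃ (j₀ : C(↥(PolSp K fun k => m₀ * dstar k), Loop ↥(UK K) (onesUK hE)))
          (s₀ : C(↥(PolSp K D), ↥(PolSp K fun k => m₀ * dstar k))),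
          IsLiftOfID N K hE _ j₀ ∧ StabSpec K φ xpt D _ s₀ ∧ j = j₀.comp s₀)

/-! ### Stabilized (colimit) spaces -/

/-- The multidegree `D + t·e`. -/
def Dt {r : ℕ} (D : Fin r → ℕ) (t : ℕ) : Fin r → ℕ := fun k => D k + t

/-- Carrier of the stabilized space: the disjoint union of the `Pol*_{D+te}`. -/
def ColCar {r : ℕ} (K : Set (Finset (Fin r))) (D : Fin r → ℕ) : Type :=
  Σ t : ℕ, ↥(PolSp K (Dt D t))

instance {r : ℕ} (K : Set (Finset (Fin r))) (D : Fin r → ℕ) :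
    TopologicalSpace (ColCar K D) := by
  unfold ColCar; infer_instance

/-- The identifications generating the colimit along the stabilization maps. -/
def ColRel {r : ℕ} (K : Set (Finset (Fin r))) (D : Fin r → ℕ)
    (s : ∀ t : ℕ, ↥(PolSp K (Dt D t)) → ↥(PolSp K (Dt D (t + 1)))) :
    ColCar K D → ColCar K D → Prop :=
  fun a b => b = ⟨a.1 + 1, s a.1 a.2⟩

/-- The stabilized space `Pol^Σ_{D+∞} = colim_t Pol*_{D+te}(S¹, X_Σ)`. -/
def PolColim {r : ℕ} (K : Set (Finset (Fin r))) (D : Fin r → ℕ)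
    (s : ∀ t : ℕ, ↥(PolSp K (Dt D t)) → ↥(PolSp K (Dt D (t + 1)))) : Type :=
  Quot (ColRel K D s)

instance {r : ℕ} (K : Set (Finset (Fin r))) (D : Fin r → ℕ)
    (s : ∀ t : ℕ, ↥(PolSp K (Dt D t)) → ↥(PolSp K (Dt D (t + 1)))) :
    TopologicalSpace (PolColim K D s) :=
  instTopologicalSpaceQuot

/-- Admissibility of a family of stabilization maps `s_{D+te}`. -/
def AdmissibleStabFamily {r : ℕ} (K : Set (Finset (Fin r))) (D : Fin r → ℕ)
    (s : ∀ t : ℕ, ↥(PolSp K (Dt D t)) → ↥(PolSp K (Dt D (t + 1)))) : Prop :=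
  ∀ t : ℕ, ∃ (φ : ℂ → ℂ) (xpt : Fin r → ℂ),
    AdmissiblePhi ((∑ k, Dt D t k : ℕ) : ℝ) φ ∧
    (∀ k, ((∑ k, Dt D t k : ℕ) : ℝ) < (xpt k).re) ∧ Function.Injective xpt ∧
    StabSpec K φ xpt (Dt D t) (Dt D (t + 1)) (s t)

/-!
The standard lift of `i_D` sends `(f_k)` to the loop `t ↦ (f_k(t) / (t + i) ^ D_k)`. Because the
fan is unimodular, any other lift differs from it by a continuous family of loops in the torus
`(ℂ*)^r`; as `Pol*_D` is path-connected, logarithms contract this family, up to a homeomorphism of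
`ΩU(K)`, so it is enough to treat the standard lift.

There the point is that low-dimensional families of loops compress into families of polynomials.
In angular coordinates a loop in `U(K)` becomes a path in `ℝ^{2r}` that avoids coordinate
subspaces of codimension at least `2 r_min`. By parametric transversality, after a small
perturbation a coordinate of a family of dimension less than `d_min (2 r_min - 2)` has fewer than
`d_min` critical times, those at which it cannot vanish without the path meeting the arrangement.
It can therefore be replaced, one coordinate after the other, by a homogenized polynomial that
agrees with it at the critical times, and the straight-line deformation avoids the arrangement.
Applied to cubes and to homotopies of cubes, this gives bijectivity on homotopy groups.
-/

/-! ### The circle as a quotient of the interval -/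

section Circle

open Set Real OnePoint Topology

variable {X Y : Type*}

/-- The collapse map `X → OnePoint Y` of a map `i : Y → X`, usually an open embedding: it inverts
`i` on its range and sends the complement of the range to `∞`. -/
def collapse (i : Y → X) (x : X) : OnePoint Y :=
  if h : ∃ y, i y = x then (h.choose : OnePoint Y) else ∞

lemma collapse_apply {i : Y → X} (hi : Function.Injective i) (y : Y) : collapse i (i y) = y := by
  have h : ∃ z, i z = i y := ⟨y, rfl⟩
  rw [collapse, dif_pos h, hi h.choose_spec]

lemma collapse_of_notMem_range {i : Y → X} {x : X} (hx : x ∉ range i) : collapse i x = ∞ :=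
  dif_neg hx

variable [TopologicalSpace X] [TopologicalSpace Y]

lemma continuous_collapse [T2Space X] {i : Y → X} (hi : IsOpenEmbedding i) :
    Continuous (collapse i) := by
  have himage : ∀ s : Set (OnePoint Y), ∞ ∉ s → collapse i ⁻¹' s = i '' ((↑) ⁻¹' s) := by
    intro s hs
    ext x
    by_cases hx : x ∈ range i
    · obtain ⟨y, rfl⟩ := hx
      simp [collapse_apply hi.injective, hi.injective.eq_iff]
    · simp only [mem_preimage, collapse_of_notMem_range hx, hs, false_iff]
      exact fun h => hx (image_subset_range _ _ h)
  refine continuous_def.2 fun s hs => ?_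
  by_cases h : ∞ ∈ s
  · rw [← isClosed_compl_iff, ← preimage_compl, himage _ (by simpa using h)]
    exact (((isOpen_def.1 hs).1 h).image hi.continuous).isClosed
  · rw [himage s h]
    exact hi.isOpenMap _ (isOpen_def.1 hs).2

lemma isOpenEmbedding_arctan : IsOpenEmbedding arctan :=
  tanPartialHomeomorph.symm.isOpenEmbedding rfl

/-- The map from angles to the circle `ℝ ∪ {∞}` that is the tangent on `(-π/2, π/2)` and `∞`
elsewhere. -/
def angleToCircle : ℝ → OnePoint ℝ := collapse arctan

/-- The section of `angleToCircle` with values in `(-π/2, π/2]`. -/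
def circleToAngle (p : OnePoint ℝ) : ℝ := p.elim (π / 2) arctan

lemma continuous_angleToCircle : Continuous angleToCircle :=
  continuous_collapse isOpenEmbedding_arctan

lemma angleToCircle_arctan (t : ℝ) : angleToCircle (arctan t) = t :=
  collapse_apply arctan_injective t

lemma angleToCircle_neg_pi_div_two : angleToCircle (-(π / 2)) = ∞ :=
  collapse_of_notMem_range fun ⟨t, ht⟩ => (neg_pi_div_two_lt_arctan t).ne' ht

lemma angleToCircle_pi_div_two : angleToCircle (π / 2) = ∞ :=
  collapse_of_notMem_range fun ⟨t, ht⟩ => (arctan_lt_pi_div_two t).ne ht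

lemma circleToAngle_infty : circleToAngle ∞ = π / 2 := rfl

lemma circleToAngle_coe (t : ℝ) : circleToAngle t = arctan t := rfl

lemma angleToCircle_circleToAngle (p : OnePoint ℝ) : angleToCircle (circleToAngle p) = p := by
  induction p with
  | infty => exact angleToCircle_pi_div_two
  | coe t => exact angleToCircle_arctan t

lemma circleToAngle_mem (p : OnePoint ℝ) : circleToAngle p ∈ Icc (-(π / 2)) (π / 2) := by
  induction p with
  | infty => exact ⟨by linarith [pi_pos, circleToAngle_infty], le_rfl⟩
  | coe t => exact ⟨(neg_pi_div_two_lt_arctan t).le, (arctan_lt_pi_div_two t).le⟩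

lemma eq_or_eq_or_exists_arctan {θ : ℝ} (hθ : θ ∈ Icc (-(π / 2)) (π / 2)) :
    θ = -(π / 2) ∨ θ = π / 2 ∨ ∃ t, arctan t = θ := by
  rcases hθ.1.eq_or_lt with h | h
  · exact .inl h.symm
  rcases hθ.2.eq_or_lt with h' | h'
  · exact .inr (.inl h')
  · exact .inr (.inr ⟨tan θ, arctan_tan h h'⟩)

lemma apply_circleToAngle_angleToCircle {Z : Type*} {g : ℝ → Z} (hg : g (-(π / 2)) = g (π / 2))
    {θ : ℝ} (hθ : θ ∈ Icc (-(π / 2)) (π / 2)) : g (circleToAngle (angleToCircle θ)) = g θ := by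
  rcases eq_or_eq_or_exists_arctan hθ with rfl | rfl | ⟨t, rfl⟩
  · rw [angleToCircle_neg_pi_div_two, circleToAngle_infty, hg]
  · rw [angleToCircle_pi_div_two, circleToAngle_infty]
  · rw [angleToCircle_arctan, circleToAngle_coe]

lemma continuous_prod_circle_iff {g : X × OnePoint ℝ → Y} :
    Continuous g ↔
      Continuous fun z : X × Icc (-(π / 2)) (π / 2) => g (z.1, angleToCircle z.2) := by
  let q : Icc (-(π / 2)) (π / 2) → OnePoint ℝ := fun θ => angleToCircle θ
  have hq : Continuous q := continuous_angleToCircle.comp continuous_subtype_val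
  have hclosed : IsClosedMap (Prod.map (id : X → X) q) :=
    (isProperMap_id.prodMap hq.isProperMap).isClosedMap
  have hsurj : Function.Surjective (Prod.map (id : X → X) q) := fun z =>
    ⟨(z.1, ⟨circleToAngle z.2, circleToAngle_mem _⟩),
      Prod.ext rfl (angleToCircle_circleToAngle z.2)⟩
  exact (hclosed.isQuotientMap (continuous_id.prodMap hq) hsurj).continuous_iff

/-- The path `θ ↦ sin θ + i cos θ` on the unit circle from `-1` at `-π/2` to `1` at `π/2`. -/
def phase (θ : ℝ) : ℂ := Complex.exp ((π / 2 - θ : ℝ) * Complex.I)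

lemma phase_ne_zero (θ : ℝ) : phase θ ≠ 0 := Complex.exp_ne_zero _

lemma continuous_phase : Continuous phase := by
  unfold phase
  fun_prop

lemma phase_pi_div_two : phase (π / 2) = 1 := by simp [phase]

lemma phase_neg_pi_div_two : phase (-(π / 2)) = -1 := by
  rw [phase, sub_neg_eq_add, add_halves, Complex.exp_pi_mul_I]

lemma phase_arctan (t : ℝ) : phase (arctan t) = cos (arctan t) * (t + Complex.I) := by
  have hsin : sin (arctan t) = cos (arctan t) * t := by
    rw [sin_arctan, cos_arctan]
    ring
  rw [phase, Complex.exp_mul_I, ← Complex.ofReal_cos, ← Complex.ofReal_sin, cos_pi_div_two_sub,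
    sin_pi_div_two_sub, hsin]
  push_cast
  ring

end Circle

/-! ### Families of loops -/

section Loops

variable {X Y : Type*} [TopologicalSpace X] [TopologicalSpace Y] {y₀ : Y}

lemma Loop.ext {γ γ' : Loop Y y₀} (h : ∀ p, γ.1 p = γ'.1 p) : γ = γ' :=
  Subtype.ext (ContinuousMap.ext h)

/-- The family of loops adjoint to a continuous map. -/
def Loop.curry (f : C(X × OnePoint ℝ, Y)) (hf : ∀ x, f (x, OnePoint.infty) = y₀) :
    C(X, Loop Y y₀) where
  toFun x := ⟨f.curry x, hf x⟩
  continuous_toFun := f.curry.continuous.subtype_mk hf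

lemma Loop.continuous_eval : Continuous fun z : Loop Y y₀ × OnePoint ℝ => z.1.1 z.2 :=
  (continuous_subtype_val.comp continuous_fst).eval continuous_snd

end Loops

/-! ### Parametric transversality -/

section Transversality

open Module

variable {X P W : Type*} [NormedAddCommGroup X] [NormedSpace ℝ X]
  [NormedAddCommGroup P] [NormedSpace ℝ P] [FiniteDimensional ℝ P]
  [NormedAddCommGroup W] [NormedSpace ℝ W] [FiniteDimensional ℝ W]

lemma exists_equiv_prod_ker_of_surjective {A : P →L[ℝ] W} (hA : Function.Surjective A) :
    ∃ (p : P →L[ℝ] A.ker) (e : P ≃L[ℝ] W × A.ker), (e : P →L[ℝ] W × A.ker) = A.prod p := by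
  obtain ⟨p, hp⟩ := Submodule.ClosedComplemented.of_finiteDimensional A.ker
  exact ⟨p, A.equivProdOfSurjectiveOfIsCompl p (LinearMap.range_eq_top.2 hA)
    (LinearMap.range_eq_top.2 fun y => ⟨y, hp y⟩) (LinearMap.isCompl_of_proj hp), rfl⟩

/- Completing `L x₀` to an isomorphism `(L x, p) : P ≃ W × ker (L x₀)`, valid for `x` near `x₀`,
parametrizes the solutions `c` by the pairs `(x, p c)`. -/
lemma exists_nhds_dimH_solutions_le [FiniteDimensional ℝ X] {L : X → P →L[ℝ] W} {g : X → W}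
    {s : Set X} (hL : ContDiff ℝ 1 L) (hg : ∀ x ∈ s, ContDiffAt ℝ 1 g x) {x₀ : X}
    (hsurj : Function.Surjective (L x₀)) :
    ∃ V ∈ nhds x₀, dimH {c | ∃ x ∈ s ∩ V, L x c = g x} ≤
      (finrank ℝ X + finrank ℝ (L x₀).ker : ℕ) := by
  obtain ⟨p, e, he⟩ := exists_equiv_prod_ker_of_surjective hsurj
  let Φ : X → P →L[ℝ] W × (L x₀).ker := fun x => (L x).prod p
  have hΦ : ContDiff ℝ 1 Φ :=
    contDiff_clm_apply_iff.2 fun c => (hL.clm_apply contDiff_const).prodMk contDiff_const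
  let Ψ : X × (L x₀).ker → P := fun q => (Φ q.1).inverse (g q.1, q.2)
  let V : Set X := Φ ⁻¹' Set.range ((↑) : (P ≃L[ℝ] W × (L x₀).ker) → P →L[ℝ] W × (L x₀).ker)
  have hV : V ∈ nhds x₀ := by
    refine hΦ.continuous.continuousAt ?_
    rw [show Φ x₀ = e from he.symm]
    exact ContinuousLinearEquiv.nhds e
  have hsub : {c | ∃ x ∈ s ∩ V, L x c = g x} ⊆ Ψ '' {q | q.1 ∈ s ∩ V} := by
    rintro c ⟨x, hx, hc⟩
    obtain ⟨e', he'⟩ := hx.2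
    refine ⟨(x, p c), hx, ?_⟩
    have hΦc : Φ x c = (g x, p c) := by rw [← hc]; rfl
    change (Φ x).inverse (g x, p c) = c
    rw [← hΦc, ← he', ContinuousLinearMap.inverse_equiv]
    exact e'.symm_apply_apply c
  have hΨ : ∀ q ∈ {q : X × (L x₀).ker | q.1 ∈ s ∩ V}, ContDiffAt ℝ 1 Ψ q := by
    rintro q ⟨hqs, e', he'⟩
    have hinv : ContDiffAt ℝ 1 ContinuousLinearMap.inverse (Φ q.1) := by
      rw [← he']; exact contDiffAt_map_inverse e'
    exact (hinv.comp q (hΦ.contDiffAt.comp q contDiffAt_fst)).clm_apply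
      (((hg q.1 hqs).comp q contDiffAt_fst).prodMk contDiffAt_snd)
  refine ⟨V, hV, ?_⟩
  calc dimH {c | ∃ x ∈ s ∩ V, L x c = g x} ≤ dimH (Ψ '' {q | q.1 ∈ s ∩ V}) := dimH_mono hsub
    _ ≤ dimH {q : X × (L x₀).ker | q.1 ∈ s ∩ V} :=
      dimH_image_le_of_locally_lipschitzOn fun q hq =>
        let ⟨K, u, hu, hK⟩ := (hΨ q hq).exists_lipschitzOnWith
        ⟨K, u, mem_nhdsWithin_of_mem_nhds hu, hK⟩
    _ ≤ dimH (Set.univ : Set (X × (L x₀).ker)) := dimH_mono (Set.subset_univ _)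
    _ = (finrank ℝ X + finrank ℝ (L x₀).ker : ℕ) := by
      rw [Real.dimH_univ_eq_finrank, finrank_prod]

lemma dimH_solutions_le [FiniteDimensional ℝ X] {L : X → P →L[ℝ] W} {g : X → W} {s : Set X}
    (hL : ContDiff ℝ 1 L) (hg : ∀ x ∈ s, ContDiffAt ℝ 1 g x)
    (hsurj : ∀ x ∈ s, Function.Surjective (L x)) (hdim : finrank ℝ X < finrank ℝ W) :
    dimH {c | ∃ x ∈ s, L x c = g x} ≤ (finrank ℝ P - 1 : ℕ) := by
  have hlocal : ∀ x ∈ s, ∃ V ∈ nhds x,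
      dimH {c | ∃ y ∈ s ∩ V, L y c = g y} ≤ (finrank ℝ P - 1 : ℕ) := by
    intro x hx
    obtain ⟨V, hV, hle⟩ := exists_nhds_dimH_solutions_le hL hg (hsurj x hx)
    have hrank := LinearMap.finrank_range_add_finrank_ker (L x).toLinearMap
    rw [LinearMap.range_eq_top.2 (hsurj x hx), finrank_top] at hrank
    exact ⟨V, hV, hle.trans (by norm_cast; omega)⟩
  choose! V hV hle using hlocal
  obtain ⟨S, hS, hScount, hcover⟩ := TopologicalSpace.countable_cover_nhdsWithin
    fun x hx => mem_nhdsWithin_of_mem_nhds (hV x hx)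
  have hsub : {c | ∃ x ∈ s, L x c = g x} ⊆ ⋃ x ∈ S, {c | ∃ y ∈ s ∩ V x, L y c = g y} := by
    rintro c ⟨y, hy, hc⟩
    obtain ⟨x, hx, hyx⟩ := Set.mem_iUnion₂.1 (hcover hy)
    exact Set.mem_biUnion hx ⟨y, ⟨hy, hyx⟩, hc⟩
  refine (dimH_mono hsub).trans ?_
  rw [dimH_bUnion hScount]
  exact iSup₂_le fun x hx => hle x (hS hx)

theorem dense_forall_apply_ne [FiniteDimensional ℝ X] {κ : Type*} [Countable κ] {W : κ → Type*}
    [∀ k, NormedAddCommGroup (W k)] [∀ k, NormedSpace ℝ (W k)] [∀ k, FiniteDimensional ℝ (W k)]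
    {L : ∀ k, X → P →L[ℝ] W k} {g : ∀ k, X → W k} {s : κ → Set X}
    (hL : ∀ k, ContDiff ℝ 1 (L k)) (hg : ∀ k, ∀ x ∈ s k, ContDiffAt ℝ 1 (g k) x)
    (hsurj : ∀ k, ∀ x ∈ s k, Function.Surjective (L k x))
    (hdim : ∀ k, finrank ℝ X < finrank ℝ (W k)) :
    Dense {c | ∀ k, ∀ x ∈ s k, L k x c ≠ g k x} := by
  have hcompl : {c | ∀ k, ∀ x ∈ s k, L k x c ≠ g k x} =
      (⋃ k, {c | ∃ x ∈ s k, L k x c = g k x})ᶜ := by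
    ext c; simp
  rcases Nat.eq_zero_or_pos (finrank ℝ P) with hP | hP
  · have hempty : ∀ k, ∀ x, x ∉ s k := fun k x hx => by
      have := LinearMap.finrank_le_finrank_of_surjective (f := (L k x).toLinearMap) (hsurj k x hx)
      have := hdim k
      omega
    simp [hempty]
  · rw [hcompl]
    refine dense_compl_of_dimH_lt_finrank (lt_of_le_of_lt (b := ((finrank ℝ P - 1 : ℕ) : ENNReal))
      ?_ (by exact_mod_cast Nat.sub_lt hP one_pos))
    rw [dimH_iUnion]
    exact iSup_le fun k => dimH_solutions_le (hL k) (hg k) (hsurj k) (hdim k)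

end Transversality

/-! ### Deforming families of paths into finite-dimensional model families -/

/-- A finite-dimensional affine space of model paths `[left, right] → ℝ^ι` with fixed endpoints,
`t ↦ base t + ∑ l, w i l * basis i t l` in coordinate `i`, which can be prescribed at any `nodes`
interior times. The paths are to avoid the coordinate subspaces `{y | ∀ j ∈ ν, y j = 0}` for the
sets `ν` in `forbidden`, each of which has at least `minCard` elements. -/
structure PathSystem (ι : Type*) [Fintype ι] where
  left : ℝ
  right : ℝ
  degree : ι → ℕ
  base : ℝ → ι → ℝ
  basis : ∀ i, ℝ → Fin (degree i) → ℝ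
  contDiff_base : ContDiff ℝ 1 base
  contDiff_basis : ∀ i, ContDiff ℝ 1 (basis i)
  basis_left : ∀ i, basis i left = 0
  basis_right : ∀ i, basis i right = 0
  nodes : ℕ
  exists_interpolation : ∀ (i : ι) (s : Finset ℝ), ↑s ⊆ Set.Ioo left right → s.card ≤ nodes →
    ∀ y : ℝ → ℝ, ∃ w : Fin (degree i) → ℝ, ∀ t ∈ s, ∑ l, w l * basis i t l = y t
  forbidden : Set (Finset ι)
  minCard : ℕ
  minCard_le_card : ∀ ν ∈ forbidden, minCard ≤ ν.card
  exists_base_left_ne_zero : ∀ ν ∈ forbidden, ∀ i, ∃ j ∈ ν, j ≠ i ∧ base left j ≠ 0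
  exists_base_right_ne_zero : ∀ ν ∈ forbidden, ∀ i, ∃ j ∈ ν, j ≠ i ∧ base right j ≠ 0

namespace PathSystem

open Set Metric AffineMap

variable {ι : Type*} [Fintype ι] (S : PathSystem ι)

/-- The coefficients of the model paths. -/
abbrev Coeff : Type _ := ∀ i, Fin (S.degree i) → ℝ

/-- The linear part of the model paths, as a function of the coefficients. -/
def comb (t : ℝ) : S.Coeff →L[ℝ] ι → ℝ :=
  ContinuousLinearMap.pi fun i => ∑ l, S.basis i t l •
    (ContinuousLinearMap.proj (R := ℝ) (φ := fun _ : Fin (S.degree i) => ℝ) l).comp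
      (ContinuousLinearMap.proj i)

lemma comb_apply (t : ℝ) (w : S.Coeff) (i : ι) :
    S.comb t w i = ∑ l, w i l * S.basis i t l := by
  simp [comb, mul_comm]

lemma comb_left : S.comb S.left = 0 := by
  ext w i
  simp [comb_apply, S.basis_left]

lemma comb_right : S.comb S.right = 0 := by
  ext w i
  simp [comb_apply, S.basis_right]

lemma contDiff_comb : ContDiff ℝ 1 S.comb := by
  refine contDiff_clm_apply_iff.2 fun w => contDiff_pi.2 fun i => ?_
  simp only [comb_apply]
  exact ContDiff.sum fun l _ => contDiff_const.mul (contDiff_pi.1 (S.contDiff_basis i) l)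

lemma exists_comb_eq {s : Finset ℝ} (hs : ↑s ⊆ Ioo S.left S.right) (hcard : s.card ≤ S.nodes)
    (y : ℝ → ι → ℝ) : ∃ w : S.Coeff, ∀ t ∈ s, S.comb t w = y t := by
  choose w hw using fun i => S.exists_interpolation i s hs hcard fun t => y t i
  exact ⟨w, fun t ht => funext fun i => (S.comb_apply t w i).trans (hw i t ht)⟩

/-- The model path with the given coefficients. -/
def modelPath (w : S.Coeff) (t : ℝ) : ι → ℝ := S.base t + S.comb t w

lemma modelPath_left (w : S.Coeff) : S.modelPath w S.left = S.base S.left := by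
  simp [modelPath, comb_left]

lemma modelPath_right (w : S.Coeff) : S.modelPath w S.right = S.base S.right := by
  simp [modelPath, comb_right]

lemma contDiff_modelPath : ContDiff ℝ 1 fun z : S.Coeff × ℝ => S.modelPath z.1 z.2 :=
  (S.contDiff_base.comp contDiff_snd).add
    ((S.contDiff_comb.comp contDiff_snd).clm_apply contDiff_fst)

lemma modelPath_combo {a b : ℝ} (hab : a + b = 1) (w w' : S.Coeff) (t : ℝ) :
    S.modelPath (a • w + b • w') t = a • S.modelPath w t + b • S.modelPath w' t := by
  have hbase : S.base t = a • S.base t + b • S.base t := by rw [← add_smul, hab, one_smul]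
  rw [modelPath, hbase, map_add, map_smul, map_smul, modelPath, modelPath]
  module

/-- The points outside the forbidden coordinate subspaces. -/
def Avoids (y : ι → ℝ) : Prop := ∀ ν ∈ S.forbidden, ∃ j ∈ ν, y j ≠ 0

lemma isOpen_setOf_avoids : IsOpen {y | S.Avoids y} := by
  have : {y | S.Avoids y} = ⋂ ν ∈ S.forbidden, ⋃ j ∈ ν, {y | y j ≠ 0} := by
    ext y; simp [Avoids]
  rw [this]
  exact (toFinite _).isOpen_biInter fun ν _ => isOpen_biUnion fun j _ =>
    isOpen_ne_fun (continuous_apply j) continuous_const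

section Families

variable {X : Type*}

/-- The `i`-th coordinate of the family `h` at the parameter `x` is that of a model path. -/
def IsModelAt (h : X × ℝ → ι → ℝ) (x : X) (i : ι) : Prop :=
  ∃ w, ∀ t ∈ Icc S.left S.right, h (x, t) i = S.modelPath w t i

variable {S} in
lemma exists_modelPath_eq {h : X × ℝ → ι → ℝ} {x : X} (hx : ∀ i, S.IsModelAt h x i) :
    ∃ w, ∀ t ∈ Icc S.left S.right, h (x, t) = S.modelPath w t := by
  choose w hw using hx
  refine ⟨fun i => w i i, fun t ht => funext fun i => ?_⟩
  simp only [hw i t ht, modelPath, Pi.add_apply, comb_apply]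

variable [TopologicalSpace X]

/-- A continuous family, parametrized by `X`, of paths that avoid the forbidden subspaces and have
the endpoints of the model paths. -/
structure Admissible (h : X × ℝ → ι → ℝ) : Prop where
  continuous : Continuous h
  avoids : ∀ x, ∀ t ∈ Icc S.left S.right, S.Avoids (h (x, t))
  eq_left : ∀ x, h (x, S.left) = S.base S.left
  eq_right : ∀ x, h (x, S.right) = S.base S.right

/-- Two admissible families that agree for parameters outside `B` and are joined by the
straight-line homotopy through admissible families. -/
structure Step (B : Set X) (h h' : X × ℝ → ι → ℝ) : Prop where
  source : S.Admissible h
  target : S.Admissible h'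
  eq_off : ∀ x ∉ B, ∀ t ∈ Icc S.left S.right, h' (x, t) = h (x, t)
  avoids : ∀ x, ∀ t ∈ Icc S.left S.right, ∀ y ∈ segment ℝ (h (x, t)) (h' (x, t)), S.Avoids y

variable {S}

lemma Admissible.exists_forall_ball_avoids {h : X × ℝ → ι → ℝ} (hh : S.Admissible h) {Q : Set X}
    (hQ : IsCompact Q) :
    ∃ ε > 0, ∀ x ∈ Q, ∀ t ∈ Icc S.left S.right, ∀ y ∈ ball (h (x, t)) ε, S.Avoids y := by
  have himage : h '' Q ×ˢ Icc S.left S.right ⊆ {y | S.Avoids y} := by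
    rintro _ ⟨⟨x, t⟩, ⟨-, ht⟩, rfl⟩
    exact hh.avoids x t ht
  obtain ⟨ε, hε, hsub⟩ :=
    ((hQ.prod isCompact_Icc).image hh.continuous).exists_thickening_subset_open
      S.isOpen_setOf_avoids himage
  exact ⟨ε, hε, fun x hx t ht y hy =>
    hsub (mem_thickening_iff.2 ⟨h (x, t), ⟨(x, t), ⟨hx, ht⟩, rfl⟩, hy⟩)⟩

end Families

/-! #### Blending two families -/

/-- The family equal to `h` where `η` vanishes and to `g` where `η` is one. -/
def blend {X V : Type*} [AddCommGroup V] [Module ℝ V] (η : X → ℝ) (h g : X × ℝ → V) (z : X × ℝ) :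
    V :=
  lineMap (h z) (g z) (η z.1)

variable {S}

lemma IsModelAt.blend {X : Type*} {h g : X × ℝ → ι → ℝ} {x : X} {i : ι} (hh : S.IsModelAt h x i)
    (hg : S.IsModelAt g x i) (η : X → ℝ) : S.IsModelAt (blend η h g) x i := by
  obtain ⟨w, hw⟩ := hh
  obtain ⟨w', hw'⟩ := hg
  refine ⟨(1 - η x) • w + η x • w', fun t ht => ?_⟩
  rw [S.modelPath_combo (sub_add_cancel 1 (η x)), PathSystem.blend, pi_lineMap_apply, hw t ht,
    hw' t ht, lineMap_apply_module]
  rfl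

variable {E : Type*} [NormedAddCommGroup E] [NormedSpace ℝ E] {c : E}

lemma contDiffAt_blend {V : Type*} [NormedAddCommGroup V] [NormedSpace ℝ V] {η : E → ℝ}
    {h g : E × ℝ → V} (hη : ContDiff ℝ 1 η) {z : E × ℝ} (hh : ContDiffAt ℝ 1 h z)
    (hg : ContDiffAt ℝ 1 g z) : ContDiffAt ℝ 1 (blend η h g) z := by
  unfold blend
  simp only [lineMap_apply_module]
  have hη' := (hη.comp contDiff_fst).contDiffAt (x := z)
  exact ((contDiffAt_const.sub hη').smul hh).add (hη'.smul hg)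

lemma contDiffAt_blend_of_mem {V : Type*} [NormedAddCommGroup V] [NormedSpace ℝ V]
    [HasContDiffBump E] (f : ContDiffBump c) {h g : E × ℝ → V} {z : E × ℝ} (hz : z.1 ∈ ball c f.rIn)
    (hg : ContDiffAt ℝ 1 g z) : ContDiffAt ℝ 1 (blend f h g) z := by
  refine hg.congr_of_eventuallyEq ?_
  filter_upwards [continuous_fst.continuousAt.preimage_mem_nhds (isOpen_ball.mem_nhds hz)] with y hy
  simp [blend, f.one_of_mem_closedBall (ball_subset_closedBall hy)]

lemma Step.of_blend [HasContDiffBump E] (f : ContDiffBump c)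
    {h g : E × ℝ → ι → ℝ} (hh : S.Admissible h) (hg : Continuous g)
    (hleft : ∀ x, g (x, S.left) = S.base S.left) (hright : ∀ x, g (x, S.right) = S.base S.right)
    (havoid : ∀ x ∈ ball c f.rOut, ∀ t ∈ Icc S.left S.right,
      ∀ y ∈ segment ℝ (h (x, t)) (g (x, t)), S.Avoids y) :
    S.Step (ball c f.rOut) h (blend f h g) := by
  have heq : ∀ x ∉ ball c f.rOut, ∀ t, blend f h g (x, t) = h (x, t) := fun x hx t => by
    simp [blend, f.zero_of_le_dist (not_lt.1 hx)]
  have hseg : ∀ x, ∀ t ∈ Icc S.left S.right,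
      ∀ y ∈ segment ℝ (h (x, t)) (blend f h g (x, t)), S.Avoids y := by
    intro x t ht y hy
    by_cases hx : x ∈ ball c f.rOut
    · refine havoid x hx t ht y ((convex_segment _ _).segment_subset (left_mem_segment ..) ?_ hy)
      exact lineMap_mem_segment ℝ _ _ ⟨f.nonneg, f.le_one⟩
    · rw [heq x hx, segment_same, mem_singleton_iff] at hy
      exact hy ▸ hh.avoids x t ht
  refine ⟨hh, ⟨?_, fun x t ht => hseg x t ht _ (right_mem_segment ..), fun x => ?_, fun x => ?_⟩,
    fun x hx t _ => heq x hx t, hseg⟩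
  · exact hh.continuous.lineMap hg (f.continuous.comp continuous_fst)
  · simp [blend, hh.eq_left, hleft]
  · simp [blend, hh.eq_right, hright]

end PathSystem

namespace PathSystem

open Set Metric AffineMap

variable {ι : Type*} [Fintype ι] (S : PathSystem ι)

/-! #### Critical times -/

/-- Points that would be moved into a forbidden subspace by setting their `i`-th coordinate to
zero. -/
def IsCritical (i : ι) (y : ι → ℝ) : Prop :=
  ∃ ν ∈ S.forbidden, i ∈ ν ∧ ∀ j ∈ ν, j ≠ i → y j = 0

lemma isClosed_setOf_isCritical (i : ι) : IsClosed {y | S.IsCritical i y} := by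
  have : {y | S.IsCritical i y} = ⋃ ν ∈ {ν | ν ∈ S.forbidden ∧ i ∈ ν},
      ⋂ j ∈ {j | j ∈ ν ∧ j ≠ i}, {y | y j = 0} := by
    ext y; simp [IsCritical, and_assoc]
  rw [this]
  exact (toFinite _).isClosed_biUnion fun ν _ => isClosed_biInter fun j _ =>
    isClosed_eq (continuous_apply j) continuous_const

variable {S}

lemma Avoids.apply_ne_zero {y : ι → ℝ} {i : ι} (hy : S.Avoids y) (hi : S.IsCritical i y) :
    y i ≠ 0 := by
  obtain ⟨ν, hν, -, hzero⟩ := hi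
  obtain ⟨j, hj, hne⟩ := hy ν hν
  rcases eq_or_ne j i with rfl | hji
  · exact hne
  · exact absurd (hzero j hj hji) hne

lemma Avoids.of_eq_off {y z : ι → ℝ} {i : ι} (hy : S.Avoids y) (hz : ∀ j ≠ i, z j = y j)
    (hi : S.IsCritical i y → z i ≠ 0) : S.Avoids z := by
  intro ν hν
  by_cases hiν : i ∈ ν
  · by_contra! hzero
    exact hi ⟨ν, hν, hiν, fun j hj hji => hz j hji ▸ hzero j hj⟩ (hzero i hiν)
  · obtain ⟨j, hj, hne⟩ := hy ν hν
    exact ⟨j, hj, hz j (ne_of_mem_of_not_mem hj hiν) ▸ hne⟩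

lemma Admissible.mem_Ioo_of_isCritical {X : Type*} [TopologicalSpace X] {h : X × ℝ → ι → ℝ}
    (hh : S.Admissible h) {x : X} {t : ℝ} {i : ι} (ht : t ∈ Icc S.left S.right)
    (hi : S.IsCritical i (h (x, t))) : t ∈ Ioo S.left S.right := by
  obtain ⟨ν, hν, -, hzero⟩ := hi
  refine ⟨ht.1.lt_of_ne ?_, ht.2.lt_of_ne ?_⟩
  · rintro rfl
    obtain ⟨j, hj, hji, hne⟩ := S.exists_base_left_ne_zero ν hν i
    exact hne (hh.eq_left x ▸ hzero j hj hji)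
  · rintro rfl
    obtain ⟨j, hj, hji, hne⟩ := S.exists_base_right_ne_zero ν hν i
    exact hne (hh.eq_right x ▸ hzero j hj hji)

variable (S)

/-- The equations expressing that a family is critical for the coordinate `i` at each of `nodes`
times, when the `l`-th time is critical because of the forbidden set `ν l`. -/
abbrev CriticalEquations (i : ι) (ν : Fin S.nodes → Finset ι) : Type _ :=
  {p : Fin S.nodes × ι // p.2 ∈ ν p.1 ∧ p.2 ≠ i}

lemma mul_le_card_criticalEquations (i : ι) {ν : Fin S.nodes → Finset ι}
    (hν : ∀ l, ν l ∈ S.forbidden) :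
    S.nodes * (S.minCard - 1) ≤ Fintype.card (S.CriticalEquations i ν) := by
  have hcard : ∀ l, S.minCard - 1 ≤ ((ν l).erase i).card := fun l =>
    (Nat.sub_le_sub_right (S.minCard_le_card _ (hν l)) 1).trans Finset.pred_card_le_card_erase
  calc S.nodes * (S.minCard - 1)
      ≤ ∑ l, ((ν l).erase i).card := by
        simpa using Finset.card_nsmul_le_sum Finset.univ _ _ fun l _ => hcard l
    _ = (Finset.univ.sigma fun l => (ν l).erase i).card := (Finset.card_sigma _ _).symm
    _ = Fintype.card (S.CriticalEquations i ν) := by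
        rw [Fintype.card_subtype]
        refine Finset.card_bij (fun a _ => (a.1, a.2)) ?_ ?_ ?_
        · simp +contextual [Finset.mem_erase]
        · rintro ⟨l, j⟩ - ⟨l', j'⟩ - h; simpa using h
        · rintro ⟨l, j⟩ h; exact ⟨⟨l, j⟩, by simpa [and_comm] using h, rfl⟩

/-- The values of the model paths that enter the critical equations. -/
def criticalEval (i : ι) (ν : Fin S.nodes → Finset ι) (t : Fin S.nodes → ℝ) :
    S.Coeff →L[ℝ] S.CriticalEquations i ν → ℝ :=
  ContinuousLinearMap.pi fun p => (ContinuousLinearMap.proj p.1.2).comp (S.comb (t p.1.1))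

variable {S}

lemma contDiff_criticalEval (i : ι) (ν : Fin S.nodes → Finset ι) :
    ContDiff ℝ 1 (S.criticalEval i ν) := by
  refine contDiff_clm_apply_iff.2 fun w => contDiff_pi.2 fun p => ?_
  exact contDiff_pi.1 ((S.contDiff_comb.comp (contDiff_apply ℝ ℝ p.1.1)).clm_apply
    contDiff_const) p.1.2

lemma criticalEval_surjective (i : ι) (ν : Fin S.nodes → Finset ι) {t : Fin S.nodes → ℝ}
    (hinj : Function.Injective t) (ht : ∀ l, t l ∈ Ioo S.left S.right) :
    Function.Surjective (S.criticalEval i ν t) := by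
  intro y
  let value (a : ℝ) (j : ι) : ℝ :=
    if h : ∃ p : S.CriticalEquations i ν, t p.1.1 = a ∧ p.1.2 = j then y h.choose else 0
  obtain ⟨w, hw⟩ := S.exists_comb_eq (s := Finset.univ.image t) (by simpa [Set.subset_def] using ht)
    (Finset.card_image_le.trans_eq (Finset.card_fin _)) value
  refine ⟨w, funext fun p => ?_⟩
  have hp : ∃ q : S.CriticalEquations i ν, t q.1.1 = t p.1.1 ∧ q.1.2 = p.1.2 := ⟨p, rfl, rfl⟩
  have hchoose : hp.choose = p :=
    Subtype.ext (Prod.ext (hinj hp.choose_spec.1) hp.choose_spec.2)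
  calc S.criticalEval i ν t w p = value (t p.1.1) p.1.2 :=
        congrFun (hw _ (Finset.mem_image_of_mem t (Finset.mem_univ _))) _
    _ = y p := by rw [← congrArg y hchoose]; exact dif_pos hp

variable {E : Type*} [NormedAddCommGroup E] [NormedSpace ℝ E] [FiniteDimensional ℝ E]

/-- The family `h` has fewer than `nodes` times critical for the coordinate `i` over `x`. -/
def HasFewCritical (S : PathSystem ι) {X : Type*} (i : ι) (h : X × ℝ → ι → ℝ) (x : X) : Prop :=
  {t | t ∈ Ioo S.left S.right ∧ S.IsCritical i (h (x, t))}.encard < S.nodes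

lemma exists_injective_of_not_hasFewCritical {X : Type*} {i : ι} {h : X × ℝ → ι → ℝ} {x : X}
    (hx : ¬S.HasFewCritical i h x) : ∃ t : Fin S.nodes → ℝ, Function.Injective t ∧
      ∀ l, t l ∈ Ioo S.left S.right ∧ S.IsCritical i (h (x, t l)) := by
  obtain ⟨T, hT, hcard⟩ := exists_subset_encard_eq (not_lt.1 hx)
  lift T to Finset ℝ using finite_of_encard_eq_coe hcard
  let e := T.equivFinOfCardEq (by simpa using hcard)
  exact ⟨fun l => e.symm l, Subtype.val_injective.comp e.symm.injective,
    fun l => hT (e.symm l).2⟩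

/- Having `nodes` critical times over a point of `E` is governed by `finrank E + nodes` parameters
and by at least `nodes * (minCard - 1)` equations, independent in the coefficients. -/
lemma dense_forall_hasFewCritical {h : E × ℝ → ι → ℝ} {Q : Set E}
    (hh : ∀ x ∈ Q, ∀ t, ContDiffAt ℝ 1 h (x, t)) (i : ι)
    (hdim : Module.finrank ℝ E < S.nodes * (S.minCard - 2)) :
    Dense {w : S.Coeff | ∀ x ∈ Q, S.HasFewCritical i (fun z => h z + S.comb z.2 w) x} := by
  let κ := {ν : Fin S.nodes → Finset ι // ∀ l, ν l ∈ S.forbidden}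
  let times : Set (E × (Fin S.nodes → ℝ)) :=
    {x | x.1 ∈ Q ∧ Function.Injective x.2 ∧ ∀ l, x.2 l ∈ Ioo S.left S.right}
  have hdense := dense_forall_apply_ne (κ := κ) (s := fun _ => times)
    (L := fun ν x => S.criticalEval i ν.1 x.2)
    (g := fun ν x p => -h (x.1, x.2 p.1.1) p.1.2)
    (fun ν => ?_)
    (fun ν x hx => contDiffAt_pi.2 fun p => ?_)
    (fun ν x hx => criticalEval_surjective i ν.1 hx.2.1 hx.2.2) (fun ν => ?_)
  · refine hdense.mono fun w hw x hx => ?_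
    by_contra hcrit
    obtain ⟨t, hinj, ht⟩ := exists_injective_of_not_hasFewCritical hcrit
    choose hmem ν hν _ hzero using ht
    exact hw ⟨ν, hν⟩ (x, t) ⟨hx, hinj, hmem⟩
      (funext fun p => (neg_eq_of_add_eq_zero_right (hzero _ _ p.2.1 p.2.2)).symm)
  · exact (contDiff_criticalEval i ν.1).comp contDiff_snd
  · have hpoint : ContDiff ℝ 1 fun x : E × (Fin S.nodes → ℝ) => (x.1, x.2 p.1.1) :=
      contDiff_fst.prodMk ((contDiff_apply ℝ ℝ p.1.1).comp contDiff_snd)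
    exact (contDiffAt_pi.1 ((hh x.1 hx.1 _).comp x hpoint.contDiffAt) p.1.2).neg
  · have hequations := S.mul_le_card_criticalEquations i ν.2
    have hminus : S.nodes * (S.minCard - 1) = S.nodes * (S.minCard - 2) + S.nodes := by
      have : 0 < S.minCard - 2 := Nat.pos_of_mul_pos_left (Nat.zero_lt_of_lt hdim)
      rw [← Nat.mul_succ]; congr 1; omega
    rw [Module.finrank_prod, Module.finrank_fin_fun, Module.finrank_fintype_fun_eq_card]
    omega

end PathSystem

namespace PathSystem

open Set Metric AffineMap

variable {ι : Type*} [Fintype ι] {S : PathSystem ι}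
variable {E : Type*} [NormedAddCommGroup E] [NormedSpace ℝ E]
variable {h : E × ℝ → ι → ℝ} {c : E} {r : ℝ} {J : Set ι}

/-- An admissible family that is `C¹` over the ball of radius `r` and consists of model paths
outside it, and whose coordinates in `J` are those of model paths everywhere. -/
structure PartlyModel (S : PathSystem ι) (c : E) (r : ℝ) (J : Set ι) (h : E × ℝ → ι → ℝ) :
    Prop where
  admissible : S.Admissible h
  isModelAt_off : ∀ x ∉ closedBall c r, ∀ i, S.IsModelAt h x i
  contDiffAt : ∀ x ∈ closedBall c r, ∀ t, ContDiffAt ℝ 1 h (x, t)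
  isModelAt : ∀ i ∈ J, ∀ x, S.IsModelAt h x i

lemma PartlyModel.blend (hh : S.PartlyModel c r J h) {η : E → ℝ} (hη : ContDiff ℝ 1 η) {B : Set E}
    {g : E × ℝ → ι → ℝ} (hstep : S.Step B h (blend η h g))
    (hg : ∀ z, ContDiffAt ℝ 1 h z → ContDiffAt ℝ 1 g z)
    (hmodel : ∀ x i, S.IsModelAt h x i → S.IsModelAt g x i) :
    S.PartlyModel c r J (PathSystem.blend η h g) where
  admissible := hstep.target
  isModelAt_off x hx i := (hh.isModelAt_off x hx i).blend (hmodel x i (hh.isModelAt_off x hx i)) η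
  contDiffAt x hx t := contDiffAt_blend hη (hh.contDiffAt x hx t) (hg _ (hh.contDiffAt x hx t))
  isModelAt i hi x := (hh.isModelAt i hi x).blend (hmodel x i (hh.isModelAt i hi x)) η

lemma PartlyModel.exists_forall_isCritical_modelPath_eq (hh : S.PartlyModel c r J h) {i : ι}
    (hfew : ∀ x ∈ closedBall c r, S.HasFewCritical i h x) (x : E) :
    ∃ w, ∀ t ∈ Icc S.left S.right, S.IsCritical i (h (x, t)) → S.modelPath w t i = h (x, t) i := by
  by_cases hx : x ∈ closedBall c r
  · have hfin := encard_lt_top_iff.1 ((hfew x hx).trans (ENat.natCast_lt_top _))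
    have hcard : hfin.toFinset.card ≤ S.nodes := by
      exact_mod_cast hfin.encard_eq_coe_toFinset_card ▸ (hfew x hx).le
    obtain ⟨w, hw⟩ := S.exists_comb_eq (s := hfin.toFinset) (by simp +contextual [subset_def])
      hcard fun t => h (x, t) - S.base t
    refine ⟨w, fun t ht hcrit => ?_⟩
    rw [modelPath, hw t (hfin.mem_toFinset.2
      ⟨hh.admissible.mem_Ioo_of_isCritical ht hcrit, hcrit⟩), add_sub_cancel]
  · obtain ⟨w, hw⟩ := hh.isModelAt_off x hx i
    exact ⟨w, fun t ht _ => (hw t ht).symm⟩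

variable [FiniteDimensional ℝ E]

lemma exists_contDiff_forall_mem_convex_of_local_const {F : Type*} [NormedAddCommGroup F]
    [NormedSpace ℝ F] {t : E → Set F} (ht : ∀ x, Convex ℝ (t x))
    (hloc : ∀ x, ∃ c, ∀ᶠ y in nhds x, c ∈ t y) :
    ∃ g : E → F, ContDiff ℝ 1 g ∧ ∀ x, g x ∈ t x := by
  obtain ⟨g, hg⟩ := exists_contMDiffMap_forall_mem_convex_of_local_const (n := 1)
    (modelWithCornersSelf ℝ E) ht hloc
  exact ⟨g, contMDiff_iff_contDiff.1 g.contMDiff, hg⟩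

/-! #### Smoothing -/

lemma Admissible.exists_contDiff_dist_lt (hh : S.Admissible h) {ε : ℝ} (hε : 0 < ε) :
    ∃ g : E × ℝ → ι → ℝ, ContDiff ℝ 1 g ∧ (∀ z, dist (g z) (h z) < ε) ∧
      (∀ x, g (x, S.left) = S.base S.left) ∧ ∀ x, g (x, S.right) = S.base S.right := by
  obtain ⟨g, hg, hdist, hsupp⟩ := Continuous.exists_contDiff_approx 1
    (f := fun z : E × ℝ => h z - S.base z.2)
    (hh.continuous.sub (S.contDiff_base.continuous.comp continuous_snd))
    (continuous_const (y := ε)) fun _ => hε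
  have hzero : ∀ z, h z = S.base z.2 → g z = 0 := fun z hz =>
    Function.notMem_support.1 fun hgz => hsupp hgz (sub_eq_zero.2 hz)
  refine ⟨fun z => S.base z.2 + g z, (S.contDiff_base.comp contDiff_snd).add hg, fun z => ?_,
    fun x => ?_, fun x => ?_⟩
  · simpa [dist_eq_norm, sub_sub_eq_add_sub, add_comm] using hdist z
  · simp [hzero _ (hh.eq_left x)]
  · simp [hzero _ (hh.eq_right x)]

lemma convex_setOf_modelPath_mem {T : Set ℝ} {A : ℝ → Set (ι → ℝ)} (hA : ∀ t, Convex ℝ (A t)) :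
    Convex ℝ {w | ∀ t ∈ T, S.modelPath w t ∈ A t} := by
  intro w hw w' hw' a b ha hb hab t ht
  rw [S.modelPath_combo hab]
  exact hA t (hw t ht) (hw' t ht) ha hb hab

lemma Admissible.exists_contDiff_modelPath_mem_ball (hh : S.Admissible h) {r' : ℝ} (hr : r < r')
    (hoff : ∀ x ∉ closedBall c r, ∀ i, S.IsModelAt h x i) {ε : ℝ} (hε : 0 < ε) :
    ∃ w : E → S.Coeff, ContDiff ℝ 1 w ∧ ∀ x, x ∉ ball c r' →
      ∀ t ∈ Icc S.left S.right, S.modelPath (w x) t ∈ ball (h (x, t)) ε := by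
  refine exists_contDiff_forall_mem_convex_of_local_const
    (t := fun x => {w | x ∉ ball c r' → ∀ t ∈ Icc S.left S.right,
      S.modelPath w t ∈ ball (h (x, t)) ε}) (fun x => ?_) fun x => ?_
  · by_cases hx : x ∈ ball c r'
    · simpa [hx] using convex_univ
    · simpa only [hx, not_false_eq_true, forall_const] using
        convex_setOf_modelPath_mem fun t => convex_ball (h (x, t)) ε
  · by_cases hx : x ∈ closedBall c r
    · refine ⟨0, ?_⟩
      filter_upwards [isOpen_ball.mem_nhds (closedBall_subset_ball hr hx)] with y hy hy'
      exact absurd hy hy'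
    · obtain ⟨w, hw⟩ := exists_modelPath_eq (hoff x hx)
      have hclose : ∀ᶠ y in nhds x, ∀ t ∈ Icc S.left S.right,
          dist (S.modelPath w t) (h (y, t)) < ε := by
        refine isCompact_Icc.eventually_forall_of_forall_eventually fun t ht => ?_
        have hcont : Continuous fun z : E × ℝ => dist (S.modelPath w z.2) (h z) :=
          (S.contDiff_modelPath.continuous.comp (continuous_const.prodMk continuous_snd)).dist
            hh.continuous
        refine hcont.continuousAt.eventually_lt continuousAt_const ?_
        simpa [hw t ht] using hε
      exact ⟨w, hclose.mono fun y hy _ => hy⟩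

theorem Admissible.exists_step_partlyModel (hh : S.Admissible h) {r₀ r₁ : ℝ} (h₀ : 0 < r₀)
    (h₀₁ : r₀ < r₁) (hoff : ∀ x ∉ closedBall c r₀, ∀ i, S.IsModelAt h x i) :
    ∃ r ∈ Ioo 0 r₁, ∃ h', S.Step (ball c r₁) h h' ∧ S.PartlyModel c r ∅ h' := by
  obtain ⟨a, h₀a, ha₁⟩ := exists_between h₀₁
  obtain ⟨r, har, hr₁⟩ := exists_between ha₁
  obtain ⟨b, hrb, hb₁⟩ := exists_between hr₁
  obtain ⟨ε, hε, havoid⟩ := hh.exists_forall_ball_avoids (isCompact_closedBall c r₁)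
  obtain ⟨g, hg, hgh, hleft, hright⟩ := hh.exists_contDiff_dist_lt hε
  obtain ⟨w, hw, hwh⟩ := hh.exists_contDiff_modelPath_mem_ball h₀a hoff hε
  let inner : ContDiffBump c := ⟨a, r, h₀.trans h₀a, har⟩
  let outer : ContDiffBump c := ⟨b, r₁, (h₀.trans h₀a).trans (har.trans hrb), hb₁⟩
  let model : E × ℝ → ι → ℝ := fun z => S.modelPath (w z.1) z.2
  let smooth := blend inner model g
  have hsmooth : ContDiff ℝ 1 smooth := contDiff_iff_contDiffAt.2 fun z =>
    contDiffAt_blend inner.contDiff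
      (S.contDiff_modelPath.comp ((hw.comp contDiff_fst).prodMk contDiff_snd)).contDiffAt
      hg.contDiffAt
  have hclose : ∀ x, ∀ t ∈ Icc S.left S.right, smooth (x, t) ∈ ball (h (x, t)) ε := by
    intro x t ht
    by_cases hx : x ∈ ball c a
    · simpa [smooth, blend, inner.one_of_mem_closedBall (ball_subset_closedBall hx)] using
        hgh (x, t)
    · exact (convex_ball _ _).segment_subset (hwh x hx t ht) (hgh (x, t))
        (lineMap_mem_segment ℝ _ _ ⟨inner.nonneg, inner.le_one⟩)
  have hstep : S.Step (ball c r₁) h (blend outer h smooth) :=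
    Step.of_blend outer hh hsmooth.continuous
      (fun x => by simp [smooth, model, blend, modelPath_left, hleft])
      (fun x => by simp [smooth, model, blend, modelPath_right, hright])
      fun x hx t ht y hy => havoid x (ball_subset_closedBall hx) t ht y
        ((convex_ball _ _).segment_subset (mem_ball_self hε) (hclose x t ht) hy)
  refine ⟨r, ⟨(h₀.trans h₀a).trans har, hr₁⟩, _, hstep, hstep.target, fun x hx i => ?_,
    fun x hx t => contDiffAt_blend_of_mem outer (closedBall_subset_ball hrb hx)
      hsmooth.contDiffAt, by simp⟩
  have hinner : inner x = 0 := inner.zero_of_le_dist (not_le.1 hx).le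
  have hx₀ : x ∉ closedBall c r₀ := fun hx' =>
    hx (closedBall_subset_closedBall (h₀a.trans har).le hx')
  exact (hoff x hx₀ i).blend ⟨w x, fun t _ => by simp [smooth, model, blend, hinner]⟩ outer

/-! #### Making one more coordinate a model coordinate -/

lemma eventually_forall_norm_comb_lt (S : PathSystem ι) {ε : ℝ} (hε : 0 < ε) :
    ∀ᶠ w in nhds (0 : S.Coeff), ∀ t ∈ Icc S.left S.right, ‖S.comb t w‖ < ε := by
  refine isCompact_Icc.eventually_forall_of_forall_eventually fun t _ => ?_
  have hcont : Continuous fun z : S.Coeff × ℝ => ‖S.comb z.2 z.1‖ :=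
    ((S.contDiff_comb.continuous.comp continuous_snd).clm_apply continuous_fst).norm
  exact hcont.continuousAt.eventually_lt continuousAt_const (by simpa using hε)

theorem PartlyModel.exists_step_hasFewCritical (hh : S.PartlyModel c r J h) {r₁ : ℝ}
    (hr : r ∈ Ioo 0 r₁) (i : ι) (hdim : Module.finrank ℝ E < S.nodes * (S.minCard - 2)) :
    ∃ h', S.Step (ball c r₁) h h' ∧ S.PartlyModel c r J h' ∧
      ∀ x ∈ closedBall c r, S.HasFewCritical i h' x := by
  obtain ⟨ε, hε, havoid⟩ := hh.admissible.exists_forall_ball_avoids (isCompact_closedBall c r₁)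
  obtain ⟨w, hsmall, hfew⟩ := mem_closure_iff_nhds.1
    (dense_forall_hasFewCritical hh.contDiffAt i hdim 0) _ (S.eventually_forall_norm_comb_lt hε)
  let f : ContDiffBump c := ⟨r, r₁, hr.1, hr.2⟩
  have hcomb : ContDiff ℝ 1 fun z : E × ℝ => S.comb z.2 w :=
    (S.contDiff_comb.comp contDiff_snd).clm_apply contDiff_const
  have hstep : S.Step (ball c r₁) h (PathSystem.blend f h fun z => h z + S.comb z.2 w) :=
    Step.of_blend f hh.admissible (hh.admissible.continuous.add hcomb.continuous)
      (fun x => by simp [hh.admissible.eq_left, comb_left])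
      (fun x => by simp [hh.admissible.eq_right, comb_right])
      fun x hx t ht y hy => havoid x (ball_subset_closedBall hx) t ht y
        ((convex_ball _ _).segment_subset (mem_ball_self hε) (by simpa using hsmall t ht) hy)
  refine ⟨_, hstep, hh.blend f.contDiff hstep (fun z hz => hz.add hcomb.contDiffAt) ?_,
    fun x hx => ?_⟩
  · rintro x j ⟨v, hv⟩
    refine ⟨v + w, fun t ht => ?_⟩
    simp [hv t ht, modelPath, add_assoc]
  · simpa [HasFewCritical, PathSystem.blend, f.one_of_mem_closedBall hx] using hfew x hx

/- At a critical time the `i`-th coordinate of `h` is nonzero and must not be deformed through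
zero; at all other times it is unconstrained. -/
lemma PartlyModel.exists_contDiff_modelPath_mul_pos (hh : S.PartlyModel c r J h) {i : ι}
    (hfew : ∀ x ∈ closedBall c r, S.HasFewCritical i h x) :
    ∃ w : E → S.Coeff, ContDiff ℝ 1 w ∧ ∀ x, ∀ t ∈ Icc S.left S.right,
      S.IsCritical i (h (x, t)) → 0 < S.modelPath (w x) t i * h (x, t) i := by
  refine exists_contDiff_forall_mem_convex_of_local_const
    (t := fun x => {w | ∀ t ∈ Icc S.left S.right,
      S.IsCritical i (h (x, t)) → 0 < S.modelPath w t i * h (x, t) i}) (fun x => ?_) fun x => ?_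
  · refine convex_setOf_modelPath_mem
      (A := fun t => {y | S.IsCritical i (h (x, t)) → 0 < y i * h (x, t) i}) fun t => ?_
    by_cases hcrit : S.IsCritical i (h (x, t))
    · simp only [hcrit, forall_const]
      exact convex_halfSpace_gt
        ((LinearMap.proj i : (ι → ℝ) →ₗ[ℝ] ℝ).smulRight (h (x, t) i)).isLinear 0
    · simpa [hcrit] using convex_univ
  · obtain ⟨w, hw⟩ := hh.exists_forall_isCritical_modelPath_eq hfew x
    refine ⟨w, isCompact_Icc.eventually_forall_of_forall_eventually (P := fun y t =>
      S.IsCritical i (h (y, t)) → 0 < S.modelPath w t i * h (y, t) i) fun t ht => ?_⟩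
    have hcont : Continuous fun z : E × ℝ => S.modelPath w z.2 i * h z i :=
      (continuous_apply i |>.comp (S.contDiff_modelPath.continuous.comp
        (continuous_const.prodMk continuous_snd))).mul
        (continuous_apply i |>.comp hh.admissible.continuous)
    by_cases hcrit : S.IsCritical i (h (x, t))
    · have hpos : 0 < S.modelPath w t i * h (x, t) i := by
        rw [hw t ht hcrit]
        exact mul_self_pos.2 ((hh.admissible.avoids x t ht).apply_ne_zero hcrit)
      filter_upwards [continuousAt_const.eventually_lt hcont.continuousAt hpos] with z hz _ using hz
    · filter_upwards [((S.isClosed_setOf_isCritical i).preimage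
        hh.admissible.continuous).isOpen_compl.mem_nhds hcrit] with z hz hz'
      exact absurd hz' hz

lemma Avoids.of_mem_segment_update {y z : ι → ℝ} {i : ι} {a : ℝ} (hy : S.Avoids y)
    (ha : S.IsCritical i y → 0 < a * y i) (hz : z ∈ segment ℝ y (Function.update y i a)) :
    S.Avoids z := by
  rw [segment_eq_image_lineMap] at hz
  obtain ⟨s, hs, rfl⟩ := hz
  refine hy.of_eq_off (i := i) (fun j hj => by simp [hj, pi_lineMap_apply]) fun hi hzero => ?_
  have hpos : 0 < lineMap (y i) a s * y i :=
    (convex_halfSpace_gt ((LinearMap.id.smulRight (y i) : ℝ →ₗ[ℝ] ℝ).isLinear) 0).segment_subset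
      (mul_self_pos.2 (hy.apply_ne_zero hi)) (ha hi) (lineMap_mem_segment ℝ _ _ hs)
  rw [pi_lineMap_apply, Function.update_self] at hzero
  simp [hzero] at hpos

theorem PartlyModel.exists_step_insert (hh : S.PartlyModel c r J h) {r₁ : ℝ} (hr : r ∈ Ioo 0 r₁)
    {i : ι} (hfew : ∀ x ∈ closedBall c r, S.HasFewCritical i h x) :
    ∃ h', S.Step (ball c r₁) h h' ∧ S.PartlyModel c r (insert i J) h' := by
  obtain ⟨w, hw, hpos⟩ := hh.exists_contDiff_modelPath_mul_pos hfew
  let f : ContDiffBump c := ⟨r, r₁, hr.1, hr.2⟩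
  let model : E × ℝ → ι → ℝ := fun z => S.modelPath (w z.1) z.2
  let g : E × ℝ → ι → ℝ := fun z => Function.update (h z) i (model z i)
  have hmodel : ContDiff ℝ 1 model :=
    S.contDiff_modelPath.comp ((hw.comp contDiff_fst).prodMk contDiff_snd)
  have hstep : S.Step (ball c r₁) h (PathSystem.blend f h g) :=
    Step.of_blend f hh.admissible
      (hh.admissible.continuous.update i (continuous_apply i |>.comp hmodel.continuous))
      (fun x => by simp [g, model, modelPath_left, hh.admissible.eq_left])
      (fun x => by simp [g, model, modelPath_right, hh.admissible.eq_right])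
      fun x _ t ht y hy => (hh.admissible.avoids x t ht).of_mem_segment_update (hpos x t ht) hy
  have hgi : ∀ x, S.IsModelAt g x i := fun x => ⟨w x, fun t _ => by simp [g, model]⟩
  have hg : S.PartlyModel c r J (PathSystem.blend f h g) := by
    refine hh.blend f.contDiff hstep (fun z hz => contDiffAt_pi.2 fun j => ?_) fun x j hj => ?_
    · rcases eq_or_ne j i with rfl | hji
      · simpa [g] using contDiffAt_pi.1 hmodel.contDiffAt j
      · simpa [g, hji] using contDiffAt_pi.1 hz j
    · rcases eq_or_ne j i with rfl | hji
      · exact hgi x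
      · obtain ⟨v, hv⟩ := hj
        exact ⟨v, fun t ht => by simp [g, hji, hv t ht]⟩
  refine ⟨_, hstep, { hg with isModelAt := ?_ }⟩
  rintro j (rfl | hj) x
  · by_cases hx : x ∈ closedBall c r
    · obtain ⟨v, hv⟩ := hgi x
      exact ⟨v, fun t ht => by simp [PathSystem.blend, f.one_of_mem_closedBall hx, hv t ht]⟩
    · exact hg.isModelAt_off x hx j
  · exact hg.isModelAt j hj x

theorem Admissible.exists_reflTransGen_step_modelPath (hh : S.Admissible h) {r₀ r₁ : ℝ}
    (h₀ : 0 < r₀) (h₀₁ : r₀ < r₁) (hdim : Module.finrank ℝ E < S.nodes * (S.minCard - 2))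
    (hoff : ∀ x ∉ closedBall c r₀, ∀ i, S.IsModelAt h x i) :
    ∃ h', Relation.ReflTransGen (S.Step (ball c r₁)) h h' ∧ S.Admissible h' ∧
      ∀ x, ∃ w, ∀ t ∈ Icc S.left S.right, h' (x, t) = S.modelPath w t := by
  obtain ⟨r, hr, g, hgstep, hg⟩ := hh.exists_step_partlyModel h₀ h₀₁ hoff
  have hchain : ∀ J : Finset ι, ∃ h', Relation.ReflTransGen (S.Step (ball c r₁)) h h' ∧
      S.PartlyModel c r J h' := by
    intro J
    induction J using Finset.induction_on with
    | empty => exact ⟨g, .single hgstep, by simpa using hg⟩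
    | insert i J _ ih =>
      obtain ⟨h₁, hchain, h₁model⟩ := ih
      obtain ⟨h₂, hstep₂, h₂model, hfew⟩ := h₁model.exists_step_hasFewCritical hr i hdim
      obtain ⟨h₃, hstep₃, h₃model⟩ := h₂model.exists_step_insert hr hfew
      exact ⟨h₃, (hchain.tail hstep₂).tail hstep₃, by simpa using h₃model⟩
  obtain ⟨h', hchain, hmodel⟩ := hchain Finset.univ
  exact ⟨h', hchain, hmodel.admissible,
    fun x => exists_modelPath_eq fun i => hmodel.isModelAt i (Finset.mem_univ i) x⟩

end PathSystem

/-! ### Maps that are bijective on homotopy groups -/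

section Cubes

open unitInterval Topology.Homotopy Metric

variable {X Y Z : Type*} [TopologicalSpace X] [TopologicalSpace Y] [TopologicalSpace Z]

lemma homotopicRel_comp_right {f f' : C(Y, Z)} {S : Set Y} (h : f.HomotopicRel f' S) (g : C(X, Y))
    {T : Set X} (hg : Set.MapsTo g T S) : (f.comp g).HomotopicRel (f'.comp g) T := by
  obtain ⟨H⟩ := h
  exact ⟨H.toHomotopy.compContinuousMap g, fun s x hx => H.eq_fst s (hg hx)⟩

/-- Bijectivity of the map induced by `j` from homotopy classes of based maps `(I^N, ∂I^N) → (X, x)`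
to those of based maps `(I^N, ∂I^N) → (Y, j x)`, stated for representatives because the target
depends on the base point `j x`. -/
structure BijectiveOnCubes (N : Type*) (j : C(X, Y)) (x : X) : Prop where
  exists_homotopicRel : ∀ p ∈ Ω^ N Y (j x), ∃ g ∈ Ω^ N X x,
    (j.comp g).HomotopicRel p (Cube.boundary N)
  homotopicRel : ∀ p ∈ Ω^ N X x, ∀ q ∈ Ω^ N X x,
    (j.comp p).HomotopicRel (j.comp q) (Cube.boundary N) → p.HomotopicRel q (Cube.boundary N)

namespace BijectiveOnCubes

lemma bijective_piMap {k : ℕ} {j : C(X, Y)} {x : X} (h : BijectiveOnCubes (Fin k) j x) :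
    Function.Bijective (piMap k j x) := by
  constructor
  · intro a b
    refine Quotient.inductionOn₂ a b fun p q hpq => ?_
    exact Quotient.sound (h.homotopicRel p.1 p.2 q.1 q.2 (Quotient.exact hpq))
  · intro b
    refine Quotient.inductionOn b fun p => ?_
    obtain ⟨g, hg, hgp⟩ := h.exists_homotopicRel p.1 p.2
    exact ⟨Quotient.mk _ ⟨g, hg⟩, Quotient.sound hgp⟩

variable {N : Type*} {j j' : C(X, Y)} {x : X}

lemma of_homotopicRel (h : BijectiveOnCubes N j' x) (hj : j.HomotopicRel j' {x}) :
    BijectiveOnCubes N j x where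
  exists_homotopicRel p hp := by
    obtain ⟨g, hg, hgp⟩ := h.exists_homotopicRel p (hj.fst_eq_snd rfl ▸ hp)
    exact ⟨g, hg, (homotopicRel_comp_right hj g hg).trans hgp⟩
  homotopicRel p hp q hq hpq := h.homotopicRel p hp q hq <|
    (homotopicRel_comp_right hj p hp).symm.trans (hpq.trans (homotopicRel_comp_right hj q hq))

lemma homeomorph_comp (h : BijectiveOnCubes N j x) (e : Y ≃ₜ Z) :
    BijectiveOnCubes N ((e : C(Y, Z)).comp j) x where
  exists_homotopicRel p hp := by
    obtain ⟨g, hg, hgp⟩ := h.exists_homotopicRel ((e.symm : C(Z, Y)).comp p) fun y hy =>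
      (congrArg e.symm (hp y hy)).trans (e.symm_apply_apply _)
    have hcancel : (e : C(Y, Z)).comp ((e.symm : C(Z, Y)).comp p) = p :=
      ContinuousMap.ext fun y => e.apply_symm_apply (p y)
    exact ⟨g, hg, hcancel ▸ hgp.comp_continuousMap (e : C(Y, Z))⟩
  homotopicRel p hp q hq hpq := by
    refine h.homotopicRel p hp q hq ?_
    convert hpq.comp_continuousMap (e.symm : C(Z, Y)) <;> ext y <;> simp

end BijectiveOnCubes

/-! #### The compression criterion -/

/-- Every family of points of `Y` over the normed space `E` that lies in the range of `j` outside a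
ball can be deformed into the range of `j`, keeping it fixed outside a slightly larger ball. -/
def CompressesInto (j : C(X, Y)) (E : Type*) [NormedAddCommGroup E] : Prop :=
  ∀ (F : C(E, Y)) (c : E) {r₀ r₁ : ℝ}, 0 < r₀ → r₀ < r₁ →
    (∀ v ∉ closedBall c r₀, F v ∈ Set.range j) →
    ∃ g : C(E, X), F.HomotopicRel (j.comp g) (ball c r₁)ᶜ

/-- The expansion of the line about `1 / 2` by the factor `1 + s`, clamped to the unit interval. -/
def expand (s y : ℝ) : I := Set.projIcc 0 1 zero_le_one (y + s * (y - 1 / 2))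

lemma continuous_expand : Continuous fun z : ℝ × ℝ => expand z.1 z.2 :=
  continuous_projIcc.comp (by fun_prop)

lemma expand_zero_left (y : I) : expand 0 y = y := by simp [expand]

lemma expand_zero {s : ℝ} (hs : 0 ≤ s) : expand s 0 = 0 :=
  Set.projIcc_of_le_left _ (by linarith)

lemma expand_one {s : ℝ} (hs : 0 ≤ s) : expand s 1 = 1 :=
  Set.projIcc_of_right_le _ (by linarith)

lemma expand_eq_zero_or_one {y : ℝ} (hy : y ∉ closedBall (1 / 2 : ℝ) (1 / 4)) :
    expand 1 y = 0 ∨ expand 1 y = 1 := by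
  rw [mem_closedBall, Real.dist_eq, abs_le, not_and_or] at hy
  exact hy.imp (fun h => Set.projIcc_of_le_left _ (by linarith))
    fun h => Set.projIcc_of_right_le _ (by linarith)

variable {N : Type*}

lemma expand_mem_boundary {s : ℝ} (hs : 0 ≤ s) {y : N → I} (hy : y ∈ Cube.boundary N) :
    (fun i => expand s (y i)) ∈ Cube.boundary N := by
  obtain ⟨i, hi⟩ := hy
  exact ⟨i, hi.imp (fun h => by simp [h, expand_zero hs]) fun h => by simp [h, expand_one hs]⟩

variable (N) in
/-- The map of `ℝ^N` onto the cube that collapses the complement of the ball of radius `1 / 4` about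
the centre of the cube to the boundary. -/
def expandCube : C(N → ℝ, N → I) where
  toFun y i := expand 1 (y i)
  continuous_toFun := continuous_pi fun i =>
    continuous_expand.comp (continuous_const.prodMk (continuous_apply i))

variable (N) in
/-- The inclusion of the cube in `ℝ^N`. -/
def cubeInclusion : C(N → I, N → ℝ) where
  toFun y i := y i
  continuous_toFun := continuous_pi fun i => continuous_subtype_val.comp (continuous_apply i)

lemma homotopicRel_comp_expandCube {x : X} {p : C(N → I, X)} (hp : p ∈ Ω^ N X x) :
    p.HomotopicRel ((p.comp (expandCube N)).comp (cubeInclusion N)) (Cube.boundary N) := by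
  have hcont : Continuous fun z : I × (N → I) => fun i => expand z.1 (z.2 i) :=
    continuous_pi fun i => continuous_expand.comp
      ((continuous_subtype_val.comp continuous_fst).prodMk
        (continuous_subtype_val.comp ((continuous_apply i).comp continuous_snd)))
  refine ⟨⟨⟨⟨fun z => p fun i => expand z.1 (z.2 i), p.continuous.comp hcont⟩, fun y => ?_,
    fun y => rfl⟩, fun s y hy => ?_⟩⟩
  · simp [expand_zero_left]
  · exact (hp _ (expand_mem_boundary s.2.1 hy)).trans (hp y hy).symm

variable [Fintype N]

lemma expandCube_mem_boundary {y : N → ℝ} (hy : y ∉ closedBall (fun _ => 1 / 2) (1 / 4)) :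
    expandCube N y ∈ Cube.boundary N := by
  rw [mem_closedBall, dist_pi_le_iff (by norm_num)] at hy
  push Not at hy
  obtain ⟨i, hi⟩ := hy
  exact ⟨i, expand_eq_zero_or_one (by simpa using hi)⟩

lemma cubeInclusion_mapsTo :
    Set.MapsTo (cubeInclusion N) (Cube.boundary N) (ball (fun _ => 1 / 2) (1 / 2))ᶜ := by
  rintro y ⟨i, hi⟩ hball
  have := (dist_pi_lt_iff (by norm_num)).1 (mem_ball.1 hball) i
  rcases hi with hi | hi <;> norm_num [cubeInclusion, hi, Real.dist_eq, abs_lt] at this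

variable {j : C(X, Y)} {x : X}

lemma CompressesInto.exists_homotopicRel (hj : Function.Injective j)
    (h : CompressesInto j (N → ℝ)) {p : C(N → I, Y)} (hp : p ∈ Ω^ N Y (j x)) :
    ∃ g ∈ Ω^ N X x, (j.comp g).HomotopicRel p (Cube.boundary N) := by
  obtain ⟨g, hg⟩ := h (p.comp (expandCube N)) (fun _ => 1 / 2) (r₀ := 1 / 4) (r₁ := 1 / 2)
    (by norm_num) (by norm_num) fun y hy => ⟨x, (hp _ (expandCube_mem_boundary hy)).symm⟩
  refine ⟨g.comp (cubeInclusion N), fun y hy => hj ?_, ?_⟩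
  · exact (hg.fst_eq_snd (cubeInclusion_mapsTo hy)).symm.trans
      (hp _ (expand_mem_boundary zero_le_one hy))
  · exact ((homotopicRel_comp_expandCube hp).trans
      (homotopicRel_comp_right hg _ cubeInclusion_mapsTo)).symm

/- The homotopy is itself compressed into the range of `j`: it lies there already at its ends and
over the boundary of the cube. -/
lemma CompressesInto.homotopicRel (hj : Function.Injective j) (h : CompressesInto j (ℝ × (N → ℝ)))
    {p q : C(N → I, X)} (hp : p ∈ Ω^ N X x) (hq : q ∈ Ω^ N X x)
    (hpq : (j.comp p).HomotopicRel (j.comp q) (Cube.boundary N)) :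
    p.HomotopicRel q (Cube.boundary N) := by
  obtain ⟨H⟩ := hpq
  have hH : ∀ s, ∀ y ∈ Cube.boundary N, H (s, y) = j x := fun s y hy =>
    (H.eq_fst s hy).trans (congrArg j (hp y hy))
  let F : C(ℝ × (N → ℝ), Y) := ⟨fun z => H (expand 1 z.1, expandCube N z.2), H.continuous.comp
    ((continuous_expand.comp (continuous_const.prodMk continuous_fst)).prodMk
      ((expandCube N).continuous.comp continuous_snd))⟩
  have hF₀ : ∀ y, F (0, y) = j (p (expandCube N y)) := fun y => by simp [F, expand_zero]
  have hF₁ : ∀ y, F (1, y) = j (q (expandCube N y)) := fun y => by simp [F, expand_one]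
  obtain ⟨g, hg⟩ := h F (1 / 2, fun _ => 1 / 2) (r₀ := 1 / 4) (r₁ := 1 / 2) (by norm_num)
    (by norm_num) (by
      rintro ⟨s, y⟩ hz
      rw [← closedBall_prod_same, Set.mem_prod, not_and_or] at hz
      rcases hz with hs | hy
      · rcases expand_eq_zero_or_one hs with hs | hs
        · exact ⟨p (expandCube N y), by simp [F, hs]⟩
        · exact ⟨q (expandCube N y), by simp [F, hs]⟩
      · exact ⟨x, (hH _ _ (expandCube_mem_boundary hy)).symm⟩)
  have hball : ∀ (s : ℝ) (y : N → ℝ), s ∉ ball (1 / 2 : ℝ) (1 / 2) ∨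
      y ∉ ball (fun _ => 1 / 2) (1 / 2) → j (g (s, y)) = F (s, y) := fun s y hz =>
    (hg.fst_eq_snd (by rwa [← ball_prod_same, Set.mem_compl_iff, Set.mem_prod, not_and_or])).symm
  have hg₀ : ∀ y, g (0, y) = p (expandCube N y) := fun y =>
    hj ((hball 0 y (.inl (by norm_num [Real.dist_eq]))).trans (hF₀ y))
  have hg₁ : ∀ y, g (1, y) = q (expandCube N y) := fun y =>
    hj ((hball 1 y (.inl (by norm_num [Real.dist_eq]))).trans (hF₁ y))
  have hgx : ∀ (s : ℝ), ∀ y ∈ Cube.boundary N, g (s, cubeInclusion N y) = x := fun s y hy =>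
    hj ((hball s _ (.inr (cubeInclusion_mapsTo hy))).trans
      (hH _ _ (expand_mem_boundary zero_le_one hy)))
  refine (homotopicRel_comp_expandCube hp).trans (.trans ?_ (homotopicRel_comp_expandCube hq).symm)
  exact ⟨⟨⟨⟨fun z => g (z.1, cubeInclusion N z.2), g.continuous.comp
    ((continuous_subtype_val.comp continuous_fst).prodMk
      ((cubeInclusion N).continuous.comp continuous_snd))⟩, fun y => hg₀ _, fun y => hg₁ _⟩,
    fun s y hy => (hgx s y hy).trans (hp _ (expand_mem_boundary zero_le_one hy)).symm⟩⟩

theorem CompressesInto.bijectiveOnCubes (hj : Function.Injective j)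
    (h : CompressesInto j (N → ℝ)) (h' : CompressesInto j (ℝ × (N → ℝ))) (x : X) :
    BijectiveOnCubes N j x where
  exists_homotopicRel _ hp := h.exists_homotopicRel hj hp
  homotopicRel _ hp _ hq hpq := h'.homotopicRel hj hp hq hpq

end Cubes

/-! ### Loops in the complement of a coordinate subspace arrangement -/

section AngularFamilies

open Set Real

variable {r : ℕ} {K : Set (Finset (Fin r))} {D : Fin r → ℕ}

lemma mul_mem_UK {x μ : Fin r → ℂ} (hx : x ∈ UK K) (hμ : ∀ k, μ k ≠ 0) :
    (fun k => μ k * x k) ∈ UK K := by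
  rw [mem_UK] at hx ⊢
  intro σ hσ
  obtain ⟨i, hi, hne⟩ := hx σ hσ
  exact ⟨i, hi, mul_ne_zero (hμ i) hne⟩

lemma mem_UK_of_forall_ne_zero (hE : ∅ ∈ K) {x : Fin r → ℂ} (hx : ∀ k, x k ≠ 0) : x ∈ UK K := by
  simpa [onesC] using mul_mem_UK (ones_mem_UK hE) hx

section PathFamilies

variable {X : Type*} [TopologicalSpace X]

/-- A family, parametrized by `X`, of paths `[-π/2, π/2] → U(K)` from `(-1)^D` to `1`. Dividing by
`phase ^ D` turns it into a family of loops; in this form the loop of a tuple of polynomials `f` is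
given by the homogenized polynomials `cos(θ)^D f(tan θ)`. -/
structure AngularFamily (K : Set (Finset (Fin r))) (D : Fin r → ℕ) (h : X × ℝ → Fin r → ℂ) :
    Prop where
  continuous : Continuous h
  mem_UK : ∀ x, ∀ θ ∈ Icc (-(π / 2)) (π / 2), h (x, θ) ∈ UK K
  eq_left : ∀ x k, h (x, -(π / 2)) k = (-1) ^ D k
  eq_right : ∀ x k, h (x, π / 2) k = 1

variable {h : X × ℝ → Fin r → ℂ} {hE : ∅ ∈ K}

namespace AngularFamily

/-- The point at angle `θ` of the loop given by the path `h (x, ·)`. -/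
def loopPoint (D : Fin r → ℕ) (h : X × ℝ → Fin r → ℂ) (x : X) (θ : ℝ) (k : Fin r) : ℂ :=
  (phase θ ^ D k)⁻¹ * h (x, θ) k

variable (H : AngularFamily K D h)

include H

lemma loopPoint_mem_UK (x : X) {θ : ℝ} (hθ : θ ∈ Icc (-(π / 2)) (π / 2)) :
    loopPoint D h x θ ∈ UK K :=
  mul_mem_UK (H.mem_UK x θ hθ) fun _ => inv_ne_zero (pow_ne_zero _ (phase_ne_zero _))

lemma loopPoint_pi_div_two (x : X) : loopPoint D h x (π / 2) = onesC := by
  ext k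
  simp [loopPoint, phase_pi_div_two, H.eq_right, onesC]

lemma loopPoint_neg_pi_div_two (x : X) : loopPoint D h x (-(π / 2)) = onesC := by
  ext k
  simp [loopPoint, phase_neg_pi_div_two, H.eq_left, onesC]

lemma loopPoint_circleToAngle_angleToCircle (x : X) {θ : ℝ} (hθ : θ ∈ Icc (-(π / 2)) (π / 2)) :
    loopPoint D h x (circleToAngle (angleToCircle θ)) = loopPoint D h x θ :=
  apply_circleToAngle_angleToCircle
    ((H.loopPoint_neg_pi_div_two x).trans (H.loopPoint_pi_div_two x).symm) hθ

lemma continuous_loopPoint :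
    Continuous fun z : X × OnePoint ℝ => loopPoint D h z.1 (circleToAngle z.2) := by
  have hpoint : Continuous fun z : X × ℝ => loopPoint D h z.1 z.2 := continuous_pi fun k =>
    (((continuous_phase.comp continuous_snd).pow _).inv₀ fun z =>
      pow_ne_zero _ (phase_ne_zero _)).mul ((continuous_apply k).comp H.continuous)
  rw [continuous_prod_circle_iff]
  refine (hpoint.comp (continuous_id.prodMap continuous_subtype_val)).congr fun z => ?_
  exact (H.loopPoint_circleToAngle_angleToCircle z.1 z.2.2).symm

/-- The family of loops `(phase ^ D)⁻¹ * h`. -/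
def toLoop (hE : ∅ ∈ K) : C(X, Loop (UK K) (onesUK hE)) :=
  Loop.curry ⟨fun z => ⟨loopPoint D h z.1 (circleToAngle z.2),
      H.loopPoint_mem_UK z.1 (circleToAngle_mem z.2)⟩, H.continuous_loopPoint.subtype_mk _⟩
    fun x => Subtype.ext (H.loopPoint_pi_div_two x)

lemma toLoop_apply (x : X) (p : OnePoint ℝ) :
    ((H.toLoop hE x).1 p).1 = loopPoint D h x (circleToAngle p) := rfl

lemma toLoop_eq_toLoop_iff {X' : Type*} [TopologicalSpace X'] {h' : X' × ℝ → Fin r → ℂ}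
    (H' : AngularFamily K D h') {x : X} {x' : X'} :
    H.toLoop hE x = H'.toLoop hE x' ↔
      ∀ θ ∈ Icc (-(π / 2)) (π / 2), h (x, θ) = h' (x', θ) := by
  refine ⟨fun heq θ hθ => funext fun k => ?_, fun heq => Loop.ext fun p => Subtype.ext ?_⟩
  · have hpoint : loopPoint D h x θ = loopPoint D h' x' θ := by
      rw [← H.loopPoint_circleToAngle_angleToCircle x hθ,
        ← H'.loopPoint_circleToAngle_angleToCircle x' hθ, ← H.toLoop_apply (hE := hE), heq,
        H'.toLoop_apply]
    exact mul_left_cancel₀ (inv_ne_zero (pow_ne_zero _ (phase_ne_zero θ))) (congrFun hpoint k)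
  · funext k
    rw [toLoop_apply, toLoop_apply, loopPoint, loopPoint, heq _ (circleToAngle_mem p)]

end AngularFamily

lemma AngularFamily.homotopicRel_toLoop (H : AngularFamily K D h) {h' : X × ℝ → Fin r → ℂ}
    (H' : AngularFamily K D h') {B : Set X}
    (heq : ∀ x ∈ B, ∀ θ ∈ Icc (-(π / 2)) (π / 2), h' (x, θ) = h (x, θ))
    (hseg : ∀ x, ∀ θ ∈ Icc (-(π / 2)) (π / 2), segment ℝ (h (x, θ)) (h' (x, θ)) ⊆ UK K) :
    (H.toLoop hE).HomotopicRel (H'.toLoop hE) B := by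
  have hline : AngularFamily K D fun z : (unitInterval × X) × ℝ =>
      AffineMap.lineMap (h (z.1.2, z.2)) (h' (z.1.2, z.2)) (z.1.1 : ℝ) :=
    { continuous := by
        have hpt : Continuous fun z : (unitInterval × X) × ℝ => (z.1.2, z.2) := by fun_prop
        exact (H.continuous.comp hpt).lineMap (H'.continuous.comp hpt) (by fun_prop)
      mem_UK := fun x θ hθ => hseg x.2 θ hθ (lineMap_mem_segment ℝ _ _ x.1.2)
      eq_left := fun x k => by
        simp [AffineMap.pi_lineMap_apply, H.eq_left, H'.eq_left]
      eq_right := fun x k => by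
        simp [AffineMap.pi_lineMap_apply, H.eq_right, H'.eq_right] }
  refine ⟨⟨⟨hline.toLoop hE, fun x => ?_, fun x => ?_⟩, fun s x hx => ?_⟩⟩
  · exact (hline.toLoop_eq_toLoop_iff H).2 fun θ _ => by simp
  · exact (hline.toLoop_eq_toLoop_iff H').2 fun θ _ => by simp
  · exact (hline.toLoop_eq_toLoop_iff H).2 fun θ hθ => by simp [heq x hx θ hθ]

lemma Loop.eval_infty (γ : Loop (UK K) (onesUK hE)) (k : Fin r) :
    (γ.1 OnePoint.infty).1 k = 1 := by
  rw [γ.2]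
  rfl

lemma Loop.ext_apply {γ γ' : Loop (UK K) (onesUK hE)} (h : ∀ p k, (γ.1 p).1 k = (γ'.1 p).1 k) :
    γ = γ' :=
  Loop.ext fun p => Subtype.ext (funext (h p))

lemma Loop.continuous_coe_eval (F : C(X, Loop (UK K) (onesUK hE))) :
    Continuous fun z : X × OnePoint ℝ => ((F z.1).1 z.2).1 :=
  continuous_subtype_val.comp (Loop.continuous_eval.comp (F.continuous.prodMap continuous_id))

/-- The angular family `phase ^ D * F` of a family of loops `F`. -/
def unwind (D : Fin r → ℕ) (F : C(X, Loop (UK K) (onesUK hE))) (z : X × ℝ) (k : Fin r) : ℂ :=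
  phase z.2 ^ D k * ((F z.1).1 (angleToCircle z.2)).1 k

lemma angularFamily_unwind (F : C(X, Loop (UK K) (onesUK hE))) :
    AngularFamily K D (unwind D F) where
  continuous := by
    have heval : Continuous fun z : X × ℝ => (F z.1).1 (angleToCircle z.2) :=
      Loop.continuous_eval.comp (F.continuous.prodMap continuous_angleToCircle)
    exact continuous_pi fun k => ((continuous_phase.comp continuous_snd).pow _).mul
      ((continuous_apply k).comp (continuous_subtype_val.comp heval))
  mem_UK x θ _ := mul_mem_UK (Subtype.prop _) fun _ => pow_ne_zero _ (phase_ne_zero _)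
  eq_left x k := by
    simp [unwind, phase_neg_pi_div_two, angleToCircle_neg_pi_div_two, Loop.eval_infty]
  eq_right x k := by
    simp [unwind, phase_pi_div_two, angleToCircle_pi_div_two, Loop.eval_infty]

lemma toLoop_unwind (F : C(X, Loop (UK K) (onesUK hE))) :
    (angularFamily_unwind (D := D) F).toLoop hE = F :=
  ContinuousMap.ext fun x => Loop.ext fun p => Subtype.ext <| funext fun k => by
    rw [AngularFamily.toLoop_apply, AngularFamily.loopPoint, unwind, angleToCircle_circleToAngle,
      inv_mul_cancel_left₀ (pow_ne_zero _ (phase_ne_zero _))]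

end PathFamilies

/-! #### The standard lift -/

/-- The homogenized polynomials `cos(θ)^D f(tan θ)`, with `a` the coefficients of the monic
polynomials `f`. -/
def homogenize (D : Fin r → ℕ) (a : ∀ k : Fin r, Fin (D k) → ℂ) (θ : ℝ) (k : Fin r) : ℂ :=
  (sin θ : ℂ) ^ D k + ∑ l : Fin (D k), a k l * ((sin θ : ℂ) ^ (l : ℕ) * (cos θ : ℂ) ^ (D k - l))

lemma eval_toPoly {d : ℕ} (a : Fin d → ℂ) (z : ℂ) :
    (toPoly a).eval z = z ^ d + ∑ l, a l * z ^ (l : ℕ) := by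
  simp [toPoly, Polynomial.eval_finsetSum]

lemma homogenize_arctan (a : ∀ k : Fin r, Fin (D k) → ℂ) (t : ℝ) (k : Fin r) :
    homogenize D a (arctan t) k = (cos (arctan t) : ℂ) ^ D k * (toPoly (a k)).eval (t : ℂ) := by
  have hsin : (sin (arctan t) : ℂ) = cos (arctan t) * t := by
    rw [← Complex.ofReal_mul, sin_arctan, cos_arctan, one_div_mul_eq_div]
  rw [homogenize, eval_toPoly, mul_add, Finset.mul_sum, hsin, mul_pow]
  congr 1
  refine Finset.sum_congr rfl fun l _ => ?_
  rw [← pow_mul_pow_sub (cos (arctan t) : ℂ) l.2.le]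
  ring

lemma homogenize_neg_pi_div_two (a : ∀ k : Fin r, Fin (D k) → ℂ) (k : Fin r) :
    homogenize D a (-(π / 2)) k = (-1) ^ D k := by
  have hpow : ∀ l : Fin (D k), (0 : ℂ) ^ (D k - l) = 0 := fun l =>
    zero_pow (Nat.sub_ne_zero_of_lt l.2)
  simp only [homogenize, cos_neg, cos_pi_div_two, sin_neg, sin_pi_div_two, Complex.ofReal_zero,
    hpow, mul_zero, Finset.sum_const_zero, add_zero, Complex.ofReal_neg, Complex.ofReal_one]

lemma homogenize_pi_div_two (a : ∀ k : Fin r, Fin (D k) → ℂ) (k : Fin r) :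
    homogenize D a (π / 2) k = 1 := by
  have hpow : ∀ l : Fin (D k), (0 : ℂ) ^ (D k - l) = 0 := fun l =>
    zero_pow (Nat.sub_ne_zero_of_lt l.2)
  simp only [homogenize, cos_pi_div_two, sin_pi_div_two, Complex.ofReal_zero, hpow, mul_zero,
    Finset.sum_const_zero, add_zero, Complex.ofReal_one, one_pow]

lemma continuous_homogenize {X : Type*} [TopologicalSpace X]
    {a : X → ∀ k : Fin r, Fin (D k) → ℂ} {θ : X → ℝ} (ha : Continuous a) (hθ : Continuous θ) :
    Continuous fun x => homogenize D (a x) (θ x) := by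
  have hcoeff (k : Fin r) (l : Fin (D k)) : Continuous fun x => a x k l :=
    (continuous_apply l).comp ((continuous_apply k).comp ha)
  unfold homogenize
  fun_prop

lemma homogenize_mem_UK (hE : ∅ ∈ K) (f : PolSp K D) {θ : ℝ} (hθ : θ ∈ Icc (-(π / 2)) (π / 2)) :
    homogenize D f.1 θ ∈ UK K := by
  rcases eq_or_eq_or_exists_arctan hθ with rfl | rfl | ⟨t, rfl⟩
  · exact mem_UK_of_forall_ne_zero hE fun k => by simp [homogenize_neg_pi_div_two]
  · exact mem_UK_of_forall_ne_zero hE fun k => by simp [homogenize_pi_div_two]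
  · simpa only [← homogenize_arctan] using mul_mem_UK (polEval_mem_UK f t) fun k =>
      pow_ne_zero (D k) (Complex.ofReal_ne_zero.2 (cos_arctan_pos t).ne')

lemma mem_polSp_of_forall_homogenize_mem_UK {a : ∀ k : Fin r, Fin (D k) → ℂ}
    (ha : ∀ θ ∈ Icc (-(π / 2)) (π / 2), homogenize D a θ ∈ UK K) : a ∈ PolSp K D := by
  intro σ hσ t
  obtain ⟨k, hk, hne⟩ := mem_UK.1 (ha (arctan t) (Ioo_subset_Icc_self (arctan_mem_Ioo t))) σ hσ
  rw [homogenize_arctan] at hne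
  exact ⟨k, hk, right_ne_zero_of_mul hne⟩

lemma angularFamily_homogenize (hE : ∅ ∈ K) :
    AngularFamily K D fun z : PolSp K D × ℝ => homogenize D z.1.1 z.2 where
  continuous := continuous_homogenize (continuous_subtype_val.comp continuous_fst) continuous_snd
  mem_UK f _ hθ := homogenize_mem_UK hE f hθ
  eq_left f k := homogenize_neg_pi_div_two f.1 k
  eq_right f k := homogenize_pi_div_two f.1 k

/-- The map `f ↦ (t ↦ f(t) / (t + i)^D)` from `Pol*_D` to the loop space of `U(K)`. -/
def standardLift (hE : ∅ ∈ K) (D : Fin r → ℕ) : C(PolSp K D, Loop (UK K) (onesUK hE)) :=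
  (angularFamily_homogenize hE).toLoop hE

lemma ofReal_add_I_ne_zero (t : ℝ) : (t : ℂ) + Complex.I ≠ 0 := fun h => by
  simpa using congrArg Complex.im h

lemma standardLift_coe (hE : ∅ ∈ K) (f : PolSp K D) (t : ℝ) (k : Fin r) :
    ((standardLift hE D f).1 t).1 k =
      ((t + Complex.I) ^ D k)⁻¹ * (toPoly (f.1 k)).eval (t : ℂ) := by
  have hcos : (cos (arctan t) : ℂ) ^ D k ≠ 0 :=
    pow_ne_zero _ (Complex.ofReal_ne_zero.2 (cos_arctan_pos t).ne')
  rw [standardLift, AngularFamily.toLoop_apply, AngularFamily.loopPoint, circleToAngle_coe,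
    homogenize_arctan, phase_arctan, mul_pow, mul_inv, mul_assoc, mul_left_comm,
    inv_mul_cancel_left₀ hcos]

/-- The values of `∑ l, a k l * z ^ l` at `z = 0, …, D k - 1`. -/
def nodeValues (D : Fin r → ℕ) :
    (∀ k : Fin r, Fin (D k) → ℂ) →ₗ[ℂ] ∀ k : Fin r, Fin (D k) → ℂ :=
  LinearMap.pi fun k => (Matrix.vandermonde fun l : Fin (D k) => (l : ℂ)).mulVecLin ∘ₗ
    LinearMap.proj k

lemma nodeValues_apply (a : ∀ k : Fin r, Fin (D k) → ℂ) (k : Fin r) (l : Fin (D k)) :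
    nodeValues D a k l = ∑ i, a k i * (l : ℂ) ^ (i : ℕ) := by
  simp [nodeValues, Matrix.mulVec, dotProduct, mul_comm]

lemma ker_nodeValues : (nodeValues D).ker = ⊥ := by
  refine LinearMap.ker_eq_bot'.2 fun a ha => funext fun k => ?_
  refine Matrix.eq_zero_of_forall_index_sum_mul_pow_eq_zero (f := fun l : Fin (D k) => (l : ℂ))
    (Nat.cast_injective.comp Fin.val_injective) fun l => ?_
  rw [← nodeValues_apply, ha]
  rfl

-- Finitely many values of the loop of `f` recover the coefficients of `f` continuously.
lemma isEmbedding_standardLift (hE : ∅ ∈ K) : Topology.IsEmbedding (standardLift hE D) := by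
  let values : Loop (UK K) (onesUK hE) → ∀ k : Fin r, Fin (D k) → ℂ := fun γ k l =>
    ((l : ℝ) + Complex.I) ^ D k * (γ.1 (l : ℝ)).1 k - (l : ℂ) ^ D k
  have hvalues : Continuous values := continuous_pi fun k => continuous_pi fun l =>
    (continuous_const.mul ((continuous_apply k).comp (continuous_subtype_val.comp
      (Loop.continuous_eval.comp (continuous_id.prodMk continuous_const))))).sub continuous_const
  have hcomp : values ∘ standardLift hE D = nodeValues D ∘ Subtype.val := by
    ext f k l
    simp only [values, Function.comp_apply, standardLift_coe, nodeValues_apply, eval_toPoly]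
    rw [mul_inv_cancel_left₀ (pow_ne_zero _ (ofReal_add_I_ne_zero _))]
    simp
  refine .of_comp (standardLift hE D).continuous hvalues (hcomp ▸ ?_)
  exact ((nodeValues D).isClosedEmbedding_of_injective ker_nodeValues).isEmbedding.comp .subtypeVal

lemma exists_standardLift_comp_eq {X : Type*} [TopologicalSpace X] {hE : ∅ ∈ K}
    (F : C(X, Loop (UK K) (onesUK hE))) (hF : ∀ x, F x ∈ range (standardLift hE D)) :
    ∃ g : C(X, PolSp K D), (standardLift hE D).comp g = F := by
  choose g hg using hF
  have hcomp : standardLift hE D ∘ g = F := funext hg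
  exact ⟨⟨g, (isEmbedding_standardLift hE).continuous_iff.2 (hcomp ▸ F.continuous)⟩,
    ContinuousMap.ext hg⟩

end AngularFamilies

/-! ### Compressing families of loops into polynomial families -/

section Compression

open Set Real

variable {r : ℕ} {K : Set (Finset (Fin r))} {D : Fin r → ℕ}

lemma rmin_le_card {σ : Finset (Fin r)} (hσ : σ ∉ K) : rmin K ≤ σ.card := by
  obtain ⟨τ, hτσ, hτ⟩ := exists_minimal_le_of_wellFoundedLT (· ∉ K) σ hσ
  have hprim : PrimitiveSet K τ :=
    ⟨hτ.prop, fun t ht => not_not.1 fun htK => hτ.not_prop_of_lt ht htK⟩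
  exact le_trans (Nat.sInf_le ⟨τ, hprim, rfl⟩) (Finset.card_le_card hτσ)

lemma dmin_le (D : Fin r → ℕ) (k : Fin r) : dmin D ≤ D k := Nat.sInf_le (mem_range_self k)

lemma exists_forall_sum_mul_pow_eq {ι k : Type*} [Field k] {m : ℕ} {s : Finset ι} {x : ι → k}
    (hx : InjOn x s) (hcard : s.card ≤ m) (y : ι → k) :
    ∃ w : Fin m → k, ∀ t ∈ s, ∑ l, w l * x t ^ (l : ℕ) = y t := by
  have hdeg : Lagrange.interpolate s x y ∈ Polynomial.degreeLT k m := Polynomial.mem_degreeLT.2 <|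
    (Lagrange.degree_interpolate_lt y hx).trans_le (mod_cast hcard)
  refine ⟨Polynomial.degreeLTEquiv k m ⟨_, hdeg⟩, fun t ht => ?_⟩
  rw [← Polynomial.eval_eq_sum_degreeLTEquiv hdeg, Lagrange.eval_interpolate_at_node y hx ht]

lemma exists_forall_sum_sin_cos_eq {m : ℕ} {s : Finset ℝ} (hs : ↑s ⊆ Ioo (-(π / 2)) (π / 2))
    (hcard : s.card ≤ m) (y : ℝ → ℝ) :
    ∃ w : Fin m → ℝ, ∀ t ∈ s, ∑ l, w l * (sin t ^ (l : ℕ) * cos t ^ (m - l)) = y t := by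
  obtain ⟨w, hw⟩ :=
    exists_forall_sum_mul_pow_eq (injOn_tan.mono hs) hcard fun t => y t / cos t ^ m
  refine ⟨w, fun t ht => ?_⟩
  have hcos : cos t ≠ 0 := (cos_pos_of_mem_Ioo (hs ht)).ne'
  rw [← div_mul_cancel₀ (y t) (pow_ne_zero m hcos), ← hw t ht, Finset.sum_mul]
  refine Finset.sum_congr rfl fun l _ => ?_
  rw [tan_eq_sin_div_cos, div_pow, ← pow_mul_pow_sub (cos t) l.2.le]
  field_simp

/-- The real and imaginary parts of a complex vector, indexed by `false` and `true`. -/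
def realCoords : (Fin r → ℂ) ≃L[ℝ] (Fin r × Bool → ℝ) :=
  LinearEquiv.toContinuousLinearEquiv
    { toFun := fun x i => bif i.2 then (x i.1).im else (x i.1).re
      invFun := fun y k => ⟨y (k, false), y (k, true)⟩
      map_add' := fun x y => by ext ⟨k, _ | _⟩ <;> simp
      map_smul' := fun c x => by ext ⟨k, _ | _⟩ <;> simp
      left_inv := fun _ => rfl
      right_inv := fun y => by ext ⟨k, _ | _⟩ <;> simp }

lemma realCoords_false (x : Fin r → ℂ) (k : Fin r) : realCoords x (k, false) = (x k).re := rfl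

lemma realCoords_true (x : Fin r → ℂ) (k : Fin r) : realCoords x (k, true) = (x k).im := rfl

/-- The path system whose model paths are the homogenized polynomials in real coordinates. -/
def angularSystem (D : Fin r → ℕ) (hK : 2 ≤ rmin K) : PathSystem (Fin r × Bool) where
  left := -(π / 2)
  right := π / 2
  degree i := D i.1
  base θ := realCoords fun k => (sin θ : ℂ) ^ D k
  basis i θ l := sin θ ^ (l : ℕ) * cos θ ^ (D i.1 - l)
  contDiff_base := realCoords.contDiff.comp <| contDiff_pi.2 fun k =>
    (Complex.ofRealCLM.contDiff.comp contDiff_sin).pow _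
  contDiff_basis _ := contDiff_pi.2 fun _ => (contDiff_sin.pow _).mul (contDiff_cos.pow _)
  basis_left i := by
    ext l
    simp [Nat.sub_ne_zero_of_lt l.2]
  basis_right i := by
    ext l
    simp [Nat.sub_ne_zero_of_lt l.2]
  nodes := dmin D
  exists_interpolation i _ hs hcard y :=
    exists_forall_sum_sin_cos_eq hs (hcard.trans (dmin_le D i.1)) y
  forbidden := {ν | ∃ σ ∉ K, ν = σ ×ˢ Finset.univ}
  minCard := 2 * rmin K
  minCard_le_card := by
    rintro _ ⟨σ, hσ, rfl⟩
    rw [Finset.card_product, Finset.card_univ, Fintype.card_bool, mul_comm]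
    exact Nat.mul_le_mul_right 2 (rmin_le_card hσ)
  exists_base_left_ne_zero := by
    rintro _ ⟨σ, hσ, rfl⟩ i
    obtain ⟨k, hk, hki⟩ := Finset.exists_mem_ne (hK.trans (rmin_le_card hσ)) i.1
    refine ⟨(k, false), by simpa using hk, fun h => hki (congrArg Prod.fst h), ?_⟩
    rcases neg_one_pow_eq_or ℂ (D k) with h | h <;> simp [realCoords_false, h]
  exists_base_right_ne_zero := by
    rintro _ ⟨σ, hσ, rfl⟩ i
    obtain ⟨k, hk, hki⟩ := Finset.exists_mem_ne (hK.trans (rmin_le_card hσ)) i.1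
    refine ⟨(k, false), by simpa using hk, fun h => hki (congrArg Prod.fst h), ?_⟩
    simp [realCoords_false]

variable {hK : 2 ≤ rmin K} {X : Type*}

lemma avoids_realCoords_iff {x : Fin r → ℂ} :
    (angularSystem D hK).Avoids (realCoords x) ↔ x ∈ UK K := by
  have hzero (k : Fin r) : x k ≠ 0 ↔ ∃ b, realCoords x (k, b) ≠ 0 := by
    simp [realCoords_false, realCoords_true, Complex.ext_iff, imp_iff_not_or]
  rw [mem_UK]
  refine ⟨fun h σ hσ => ?_, ?_⟩
  · obtain ⟨⟨k, b⟩, hk, hne⟩ := h _ ⟨σ, hσ, rfl⟩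
    exact ⟨k, (Finset.mem_product.1 hk).1, (hzero k).2 ⟨b, hne⟩⟩
  · rintro h _ ⟨σ, hσ, rfl⟩
    obtain ⟨k, hk, hne⟩ := h σ hσ
    obtain ⟨b, hb⟩ := (hzero k).1 hne
    exact ⟨(k, b), Finset.mem_product.2 ⟨hk, Finset.mem_univ b⟩, hb⟩

lemma modelPath_eq_realCoords_homogenize (w : (angularSystem D hK).Coeff) (θ : ℝ) :
    (angularSystem D hK).modelPath w θ =
      realCoords (homogenize D (fun k l => ⟨w (k, false) l, w (k, true) l⟩) θ) := by
  have hmonomial (k : Fin r) (l : Fin (D k)) : (sin θ : ℂ) ^ (l : ℕ) * (cos θ : ℂ) ^ (D k - l) =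
      ((sin θ ^ (l : ℕ) * cos θ ^ (D k - l) : ℝ) : ℂ) := by push_cast; rfl
  funext ⟨k, b⟩
  rw [PathSystem.modelPath, Pi.add_apply, PathSystem.comb_apply]
  cases b
  · simp only [realCoords_false, homogenize, hmonomial, angularSystem, Complex.add_re,
      Complex.re_sum, Complex.re_mul_ofReal]
    rfl
  · simp only [realCoords_true, homogenize, hmonomial, angularSystem, Complex.add_im,
      Complex.im_sum, Complex.im_mul_ofReal]
    rfl

lemma isModelAt_homogenize {h : X × ℝ → Fin r → ℂ} {x : X} (a : ∀ k, Fin (D k) → ℂ)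
    (ha : ∀ θ ∈ Icc (-(π / 2)) (π / 2), h (x, θ) = homogenize D a θ) (i : Fin r × Bool) :
    (angularSystem D hK).IsModelAt (fun z => realCoords (h z)) x i := by
  refine ⟨fun i l => bif i.2 then (a i.1 l).im else (a i.1 l).re, fun θ hθ => ?_⟩
  rw [modelPath_eq_realCoords_homogenize]
  exact congrFun (congrArg realCoords (ha θ hθ)) i

variable [TopologicalSpace X]

lemma admissible_realCoords_iff {h : X × ℝ → Fin r → ℂ} :
    (angularSystem D hK).Admissible (fun z => realCoords (h z)) ↔ AngularFamily K D h := by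
  have hleft : (fun k => (sin (-(π / 2)) : ℂ) ^ D k) = fun k => (-1) ^ D k := by simp
  have hright : (fun k => (sin (π / 2) : ℂ) ^ D k) = fun _ => 1 := by simp
  refine ⟨fun H => ⟨?_, fun x θ hθ => avoids_realCoords_iff.1 (H.avoids x θ hθ), fun x => ?_,
    fun x => ?_⟩, fun H => ⟨?_, fun x θ hθ => avoids_realCoords_iff.2 (H.mem_UK x θ hθ),
    fun x => ?_, fun x => ?_⟩⟩
  · exact realCoords.comp_continuous_iff.1 H.continuous
  · exact congrFun ((realCoords.injective (H.eq_left x)).trans hleft)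
  · exact congrFun ((realCoords.injective (H.eq_right x)).trans hright)
  · exact realCoords.continuous.comp H.continuous
  · exact congrArg realCoords ((funext (H.eq_left x)).trans hleft.symm)
  · exact congrArg realCoords ((funext (H.eq_right x)).trans hright.symm)

lemma homotopicRel_toLoop_of_reflTransGen {h h' : X × ℝ → Fin r → ℂ} {B : Set X} {hE : ∅ ∈ K}
    (H : AngularFamily K D h) (H' : AngularFamily K D h')
    (hsteps : Relation.ReflTransGen ((angularSystem D hK).Step B) (fun z => realCoords (h z))
      (fun z => realCoords (h' z))) :
    (H.toLoop hE).HomotopicRel (H'.toLoop hE) Bᶜ := by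
  generalize hg : (fun z => realCoords (h' z)) = g at hsteps
  induction hsteps generalizing h' with
  | refl =>
    have hh' : h' = h := funext fun z => realCoords.injective (congrFun hg z)
    subst hh'
    exact .refl _
  | @tail b _ _ hstep ih =>
    have hb : (fun z => realCoords (realCoords.symm (b z))) = b := by simp
    rw [← hb, ← hg] at hstep
    have Hb := admissible_realCoords_iff.1 hstep.source
    refine (ih Hb hb).trans (Hb.homotopicRel_toLoop H' (fun x hx θ hθ => ?_) fun x θ hθ y hy => ?_)
    · exact realCoords.injective (hstep.eq_off x hx θ hθ)
    · refine avoids_realCoords_iff.1 (hstep.avoids x θ hθ _ ?_)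
      obtain ⟨p, q, hp, hq, hpq, rfl⟩ := hy
      exact ⟨p, q, hp, hq, hpq, by simp⟩

theorem compressesInto_standardLift (hK : 2 ≤ rmin K) (hE : ∅ ∈ K) {E : Type*}
    [NormedAddCommGroup E] [NormedSpace ℝ E] [FiniteDimensional ℝ E]
    (hdim : Module.finrank ℝ E < dmin D * (2 * rmin K - 2)) :
    CompressesInto (standardLift hE D) E := by
  intro F c r₀ r₁ h₀ h₀₁ hF
  have H : AngularFamily K D (unwind D F) := angularFamily_unwind F
  have hmodel : ∀ x ∉ Metric.closedBall c r₀, ∀ i,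
      (angularSystem D hK).IsModelAt (fun z => realCoords (unwind D F z)) x i := fun x hx => by
    obtain ⟨f, hf⟩ := hF x hx
    rw [← toLoop_unwind (D := D) F] at hf
    exact isModelAt_homogenize f.1
      ((H.toLoop_eq_toLoop_iff (angularFamily_homogenize hE)).1 hf.symm)
  obtain ⟨g', hsteps, hadm, hmodel'⟩ :=
    (admissible_realCoords_iff.2 H).exists_reflTransGen_step_modelPath h₀ h₀₁ hdim hmodel
  obtain ⟨h', rfl⟩ : ∃ h' : E × ℝ → Fin r → ℂ, (fun z => realCoords (h' z)) = g' :=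
    ⟨fun z => realCoords.symm (g' z), by simp⟩
  have H' := admissible_realCoords_iff.1 hadm
  have hrange : ∀ x, H'.toLoop hE x ∈ range (standardLift hE D) := fun x => by
    obtain ⟨w, hw⟩ := hmodel' x
    have ha : ∀ θ ∈ Icc (-(π / 2)) (π / 2), h' (x, θ) =
        homogenize D (fun k l => ⟨w (k, false) l, w (k, true) l⟩) θ := fun θ hθ =>
      realCoords.injective ((hw θ hθ).trans (modelPath_eq_realCoords_homogenize w θ))
    have hmem := mem_polSp_of_forall_homogenize_mem_UK fun θ hθ => ha θ hθ ▸ H'.mem_UK x θ hθ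
    exact ⟨⟨_, hmem⟩, ((angularFamily_homogenize hE).toLoop_eq_toLoop_iff H').2
      fun θ hθ => (ha θ hθ).symm⟩
  obtain ⟨g, hg⟩ := exists_standardLift_comp_eq (H'.toLoop hE) hrange
  refine ⟨g, ?_⟩
  rw [hg, ← toLoop_unwind (D := D) F]
  exact homotopicRel_toLoop_of_reflTransGen H H' hsteps

end Compression

/-! ### The toric quotient -/

/-- For every `σ ∈ K`, each vector `N i` with `i ∈ σ` is detected by an integral functional that
vanishes on the other vectors of `σ`; that is, the vectors `N i`, `i ∈ σ`, are part of a
`ℤ`-basis. -/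
def IsUnimodularOn {n r : ℕ} (N : Fin r → Fin n → ℤ) (K : Set (Finset (Fin r))) : Prop :=
  ∀ σ ∈ K, ∀ i ∈ σ, ∃ m : Fin n → ℤ, N i ⬝ᵥ m = 1 ∧ ∀ k ∈ σ, k ≠ i → N k ⬝ᵥ m = 0

section Fans

variable {n r : ℕ} {N : Fin r → Fin n → ℤ} {σ : Finset (Fin r)} {i : Fin r}

lemma smul_zr_mem_coneIdx (hi : i ∈ σ) {t : ℝ} (ht : 0 ≤ t) : t • zr (N i) ∈ coneIdx N σ :=
  ⟨fun k => if k = i then t else 0, fun k => ite_nonneg ht le_rfl, by simp [ite_smul, hi]⟩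

lemma zr_mem_coneIdx (hi : i ∈ σ) : zr (N i) ∈ coneIdx N σ := by
  simpa using smul_zr_mem_coneIdx hi zero_le_one

lemma exists_apply_zr_eq_zero {L : (Fin n → ℝ) →ₗ[ℝ] ℝ} (hL : ∀ x ∈ coneIdx N σ, 0 ≤ L x)
    {x : Fin n → ℝ} (hx : x ∈ coneIdx N σ) (hx₀ : x ≠ 0) (hLx : L x = 0) :
    ∃ k ∈ σ, L (zr (N k)) = 0 := by
  obtain ⟨lam, hlam, rfl⟩ := hx
  simp only [map_sum, map_smul, smul_eq_mul] at hLx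
  obtain ⟨k, hk, hne⟩ := Finset.exists_ne_zero_of_sum_ne_zero hx₀
  rw [Finset.sum_eq_zero_iff_of_nonneg
    fun k hk => mul_nonneg (hlam k) (hL _ (zr_mem_coneIdx hk))] at hLx
  exact ⟨k, hk, (mul_eq_zero.1 (hLx k hk)).resolve_left (left_ne_zero_of_smul hne)⟩

variable {F : Fan n} {b : Module.Basis (Fin n) ℤ (Fin n → ℤ)} {l : Fin n}

lemma IsPrimGens.eq_of_zr_mem_ray (hPG : IsPrimGens F N) (hl : zr (b l) ∈ ray (zr (N i))) :
    N i = b l := by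
  have hmem : zr (b l) ∈ ray (zr (N i)) ∩ {x | IsLatticePoint x} := ⟨hl, fun j => ⟨b l j, rfl⟩⟩
  rw [hPG.primitive i] at hmem
  obtain ⟨c, hc⟩ := hmem
  have hbl : b l = (c : ℤ) • N i := funext fun j => by
    simpa [zr, ← @Int.cast_inj ℝ] using congrFun hc j
  have hunit : (1 : ℤ) = c * b.coord l (N i) := by
    rw [← smul_eq_mul, ← map_smul, ← hbl, b.coord_apply, b.repr_self, Finsupp.single_eq_same]
  have hc_one : (c : ℤ) = 1 :=
    Int.eq_one_of_dvd_one (Int.natCast_nonneg c) (Dvd.intro _ hunit.symm)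
  rw [hbl, hc_one, one_smul]

-- The ray of `N i` is a face of the cone of `σ`, so it contains one of the generators `b l`.
lemma IsPrimGens.exists_eq_basis (hPG : IsPrimGens F N) (hσ : σ ∈ KC F N) {s : Finset (Fin n)}
    (hb : coneIdx N σ = coneIdx b s) (hi : i ∈ σ) : ∃ l, N i = b l := by
  have hray : ray (zr (N i)) ⊆ coneIdx N σ := by
    rintro _ ⟨t, ht, rfl⟩
    exact smul_zr_mem_coneIdx hi ht
  have hNi : zr (N i) ∈ ray (zr (N i)) := ⟨1, zero_le_one, (one_smul ℝ _).symm⟩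
  have hne : zr (N i) ≠ 0 := fun h => hPG.ne_zero i <| funext fun j => by
    simpa [zr] using congrFun h j
  obtain ⟨L, hL, hface⟩ := F.inter_face _ hσ _ (hPG.ray_mem i)
  rw [Set.inter_eq_right.2 hray] at hface
  obtain ⟨hNi_cone, hLN⟩ := hface ▸ hNi
  rw [hb] at hL hNi_cone
  obtain ⟨l, hl, hLb⟩ := exists_apply_zr_eq_zero hL hNi_cone hne hLN
  refine ⟨l, hPG.eq_of_zr_mem_ray ?_⟩
  rw [hface, hb]
  exact ⟨zr_mem_coneIdx hl, hLb⟩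

lemma isUnimodularOn_KC (hPG : IsPrimGens F N) (hNS : F.NonSingular) :
    IsUnimodularOn N (KC F N) := by
  intro σ hσ i hi
  obtain ⟨b, s, hb⟩ := hNS _ hσ
  obtain ⟨l, hl⟩ := hPG.exists_eq_basis hσ hb hi
  have hdual (v : Fin n → ℤ) : v ⬝ᵥ (dotProductEquiv ℤ (Fin n)).symm (b.coord l) = b.repr v l := by
    rw [dotProduct_comm, ← dotProductEquiv_apply_apply, LinearEquiv.apply_symm_apply, b.coord_apply]
  refine ⟨(dotProductEquiv ℤ (Fin n)).symm (b.coord l), ?_, fun k hk hki => ?_⟩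
  · rw [hdual, hl, b.repr_self, Finsupp.single_eq_same]
  · obtain ⟨l', hl'⟩ := hPG.exists_eq_basis hσ hb hk
    have hne : l' ≠ l := fun h => hki (hPG.inj (by rw [hl', hl, h]))
    rw [hdual, hl', b.repr_self, Finsupp.single_eq_of_ne' hne]

end Fans

section Quotient

variable {n r : ℕ} {N : Fin r → Fin n → ℤ} {K : Set (Finset (Fin r))} {D : Fin r → ℕ}

lemma GSet.one_mem : 1 ∈ GSet N := ⟨by simp, by simp⟩

lemma GSet.mul_mem {μ ν : Fin r → ℂ} (hμ : μ ∈ GSet N) (hν : ν ∈ GSet N) : μ * ν ∈ GSet N :=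
  ⟨fun k => mul_ne_zero (hμ.1 k) (hν.1 k), fun m => by
    simp only [Pi.mul_apply, mul_zpow, Finset.prod_mul_distrib, hμ.2 m, hν.2 m, mul_one]⟩

lemma GSet.inv_mem {μ : Fin r → ℂ} (hμ : μ ∈ GSet N) : μ⁻¹ ∈ GSet N :=
  ⟨fun k => inv_ne_zero (hμ.1 k), fun m => by
    simp only [Pi.inv_apply, inv_zpow, Finset.prod_inv_distrib, hμ.2 m, inv_one]⟩

lemma toricRel_equivalence : Equivalence (toricRel N K) where
  refl _ := ⟨1, GSet.one_mem, by simp⟩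
  symm := by
    rintro x y ⟨μ, hμ, h⟩
    exact ⟨μ⁻¹, GSet.inv_mem hμ, by simp [← h, inv_mul_cancel_left₀ (hμ.1 _)]⟩
  trans := by
    rintro x y z ⟨μ, hμ, h⟩ ⟨ν, hν, h'⟩
    exact ⟨ν * μ, GSet.mul_mem hν hμ, by simp [← h', ← h, mul_assoc]⟩

lemma qmap_eq_iff {x y : UK K} : qmap N K x = qmap N K y ↔ toricRel N K x y :=
  toricRel_equivalence.quot_mk_eq_iff x y

lemma GSet.apply_eq_prod_compl {σ : Finset (Fin r)} {i : Fin r} (hi : i ∈ σ) {m : Fin n → ℤ}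
    (hm : N i ⬝ᵥ m = 1) (hm' : ∀ k ∈ σ, k ≠ i → N k ⬝ᵥ m = 0) {μ : Fin r → ℂ} (hμ : μ ∈ GSet N) :
    μ i = ∏ k ∈ σᶜ, (μ k ^ (N k ⬝ᵥ m))⁻¹ := by
  have hσ : ∏ k ∈ σ, μ k ^ (N k ⬝ᵥ m) = μ i := by
    rw [Finset.prod_eq_single_of_mem i hi fun k hk hki => by rw [hm' k hk hki, zpow_zero], hm,
      zpow_one]
  have h : ∏ k, μ k ^ (N k ⬝ᵥ m) = 1 := hμ.2 m
  rw [← Finset.prod_mul_prod_compl σ, hσ] at h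
  rw [Finset.prod_inv_distrib]
  exact eq_inv_of_mul_eq_one_left h

lemma filter_eq_zero_mem {x : Fin r → ℂ} (hx : x ∈ UK K) :
    (Finset.univ.filter fun k => x k = 0) ∈ K := by
  by_contra h
  obtain ⟨i, hi, hne⟩ := mem_UK.1 hx _ h
  exact hne (Finset.mem_filter.1 hi).2

-- Where a coordinate of `a` does not vanish, `μ` is a quotient; the coordinates of `a` vanishing at
-- a point index a cone, and there `μ` is a monomial in its other coordinates.
lemma continuous_of_mul_eq (hN : IsUnimodularOn N K) {Z : Type*} [TopologicalSpace Z]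
    {a b μ : Z → Fin r → ℂ} (ha : Continuous a) (hb : Continuous b) (haU : ∀ z, a z ∈ UK K)
    (hμ : ∀ z, μ z ∈ GSet N) (hab : ∀ z, μ z * a z = b z) : Continuous μ := by
  refine continuous_iff_continuousAt.2 fun z₀ => continuousAt_pi.2 fun i => ?_
  have hquot : ∀ k, a z₀ k ≠ 0 → ContinuousAt (fun z => μ z k) z₀ := fun k hk => by
    have ha' : ContinuousAt (fun z => a z k) z₀ := ((continuous_apply k).comp ha).continuousAt
    have hb' : ContinuousAt (fun z => b z k) z₀ := ((continuous_apply k).comp hb).continuousAt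
    refine (hb'.div ha' hk).congr ?_
    filter_upwards [ha'.eventually_ne hk] with z hz
    rw [Pi.div_apply, ← hab, Pi.mul_apply, mul_div_cancel_right₀ _ hz]
  by_cases hi : a z₀ i = 0
  · have hi' : i ∈ Finset.univ.filter fun k => a z₀ k = 0 := by simpa using hi
    obtain ⟨m, hm, hm'⟩ := hN _ (filter_eq_zero_mem (haU z₀)) i hi'
    simp only [GSet.apply_eq_prod_compl hi' hm hm' (hμ _)]
    refine tendsto_finsetProd _ fun k hk => ?_
    exact ((hquot k (by simpa using hk)).zpow₀ _ (Or.inl ((hμ z₀).1 k))).inv₀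
      (zpow_ne_zero _ ((hμ z₀).1 k))
  · exact hquot i hi

lemma prod_zpow_eq_zpow_sum {M ι : Type*} [CommGroupWithZero M] {z : M} (hz : z ≠ 0)
    (s : Finset ι) (e : ι → ℤ) :
    ∏ k ∈ s, z ^ e k = z ^ ∑ k ∈ s, e k := by
  induction s using Finset.cons_induction with
  | empty => simp
  | cons k s hk ih => rw [Finset.prod_cons, Finset.sum_cons, zpow_add₀ hz, ih]

lemma pow_mem_GSet (hsum : ∑ k, (D k : ℤ) • N k = 0) {z : ℂ} (hz : z ≠ 0) :
    (fun k => z ^ D k) ∈ GSet N := by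
  refine ⟨fun k => pow_ne_zero _ hz, fun m => ?_⟩
  have hexp : ∑ k, (D k : ℤ) * (N k ⬝ᵥ m) = 0 := by
    simp only [← smul_eq_mul, ← smul_dotProduct, ← sum_dotProduct, hsum, zero_dotProduct]
  calc ∏ k, (z ^ D k) ^ (N k ⬝ᵥ m) = ∏ k, z ^ ((D k : ℤ) * (N k ⬝ᵥ m)) :=
        Finset.prod_congr rfl fun k _ => by rw [zpow_mul, zpow_natCast]
    _ = z ^ ∑ k, (D k : ℤ) * (N k ⬝ᵥ m) := prod_zpow_eq_zpow_sum hz _ _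
    _ = 1 := by rw [hexp, zpow_zero]

lemma isLiftOfID_standardLift (hE : ∅ ∈ K) (hsum : ∑ k, (D k : ℤ) • N k = 0) :
    IsLiftOfID N K hE D (standardLift hE D) := fun f t =>
  Quot.sound ⟨_, pow_mem_GSet hsum (ofReal_add_I_ne_zero t), funext fun k => by
    rw [standardLift_coe, mul_inv_cancel_left₀ (pow_ne_zero _ (ofReal_add_I_ne_zero t))]⟩

end Quotient

/-! ### Path-connectedness of the polynomial spaces -/

section Connectedness

open Polynomial Topology

variable {r : ℕ} {K : Set (Finset (Fin r))} {D : Fin r → ℕ} {a b : ∀ k : Fin r, Fin (D k) → ℂ}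

lemma finite_setOf_re_eval_toPoly_eq_zero {d : ℕ} (a : Fin d → ℂ) :
    {t : ℝ | ((toPoly a).eval (t : ℂ)).re = 0}.Finite := by
  let P : ℝ[X] := X ^ d + ∑ l : Fin d, C (a l).re * X ^ (l : ℕ)
  have hP : P ≠ 0 := (monic_X_pow_add (degree_sum_fin_lt fun l => (a l).re)).ne_zero
  refine (finite_setOfPred_isRoot hP).subset fun t ht => ?_
  rw [Set.mem_ofPred_eq, eval_toPoly] at ht
  simpa [P, eval_finsetSum, ← Complex.ofReal_pow] using ht

/-- The tuples of monic polynomials none of which has a real root. -/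
def rootFree (D : Fin r → ℕ) : Set (∀ k : Fin r, Fin (D k) → ℂ) :=
  {a | ∀ k, ∀ t : ℝ, (toPoly (a k)).eval (t : ℂ) ≠ 0}

lemma rootFree_subset_polSp (hE : ∅ ∈ K) : rootFree D ⊆ PolSp K D := by
  intro a ha σ hσ t
  obtain ⟨i, hi⟩ := Finset.nonempty_iff_ne_empty.2 fun h : σ = ∅ => hσ (h ▸ hE)
  exact ⟨i, hi, ha i t⟩

/-- The coefficient tuple whose constant terms are `i` and whose other coefficients vanish. -/
def constI (D : Fin r → ℕ) (k : Fin r) (l : Fin (D k)) : ℂ :=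
  if (l : ℕ) = 0 then Complex.I else 0

lemma eval_toPoly_add_smul_constI (hD : ∀ k, 0 < D k) (a : ∀ k : Fin r, Fin (D k) → ℂ) (s : ℝ)
    (k : Fin r) (z : ℂ) :
    (toPoly ((a + s • constI D) k)).eval z = (toPoly (a k)).eval z + s * Complex.I := by
  have hconst : ∑ l, constI D k l * z ^ (l : ℕ) = Complex.I := by
    rw [Finset.sum_eq_single_of_mem (⟨0, hD k⟩ : Fin (D k)) (Finset.mem_univ _)]
    · simp [constI]
    · intro l _ hl
      simp [constI, show (l : ℕ) ≠ 0 from fun h => hl (Fin.ext h)]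
  simp only [eval_toPoly, Pi.add_apply, Pi.smul_apply, Complex.real_smul, add_mul, mul_assoc,
    Finset.sum_add_distrib, ← Finset.mul_sum, hconst, add_assoc]

-- Adding `s i` to a polynomial creates a real root `t` only if its real part vanishes at `t` and
-- its imaginary part takes the value `-s` there, which excludes finitely many `s`.
lemma eventually_add_smul_constI_mem_rootFree (hD : ∀ k, 0 < D k)
    (a : ∀ k : Fin r, Fin (D k) → ℂ) : ∀ᶠ s : ℝ in 𝓝[>] 0, a + s • constI D ∈ rootFree D := by
  let bad : Set ℝ := ⋃ k, (fun t : ℝ => -((toPoly (a k)).eval (t : ℂ)).im) ''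
    {t : ℝ | ((toPoly (a k)).eval (t : ℂ)).re = 0}
  have hbad : bad.Finite :=
    Set.finite_iUnion fun k => (finite_setOf_re_eval_toPoly_eq_zero (a k)).image _
  filter_upwards
    [nhdsGT_le_nhdsNE 0 (nhdsNE_of_nhdsNE_sdiff_finite Filter.univ_mem hbad)] with s hs k t hroot
  rw [eval_toPoly_add_smul_constI hD] at hroot
  refine hs.2 (Set.mem_iUnion.2 ⟨k, t, ?_, ?_⟩)
  · simpa using congrArg Complex.re hroot
  · exact neg_eq_of_add_eq_zero_right (by simpa using congrArg Complex.im hroot)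

lemma exists_mem_rootFree_joinedIn (hD : ∀ k, 0 < D k) (hE : ∅ ∈ K) (ha : a ∈ PolSp K D) :
    ∃ b ∈ rootFree D, JoinedIn (PolSp K D) a b := by
  obtain ⟨s, hs, hfree⟩ := mem_nhdsGT_iff_exists_Ioc_subset.1
    (eventually_add_smul_constI_mem_rootFree hD a)
  refine ⟨a + s • constI D, hfree ⟨hs, le_rfl⟩, JoinedIn.of_segment_subset ?_⟩
  rw [segment_eq_image']
  rintro _ ⟨θ, ⟨hθ, hθ'⟩, rfl⟩
  simp only [add_sub_cancel_left, smul_smul]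
  rcases hθ.eq_or_lt with rfl | hθ
  · simpa using ha
  · exact rootFree_subset_polSp hE (hfree ⟨mul_pos hθ hs, mul_le_of_le_one_left hs.le hθ'⟩)

lemma joinedIn_polSp_of_eq_off (hK : 2 ≤ rmin K) (i : Fin r)
    (ha : ∀ k ≠ i, ∀ t : ℝ, (toPoly (a k)).eval (t : ℂ) ≠ 0) (hab : ∀ k ≠ i, b k = a k) :
    JoinedIn (PolSp K D) a b := by
  refine JoinedIn.of_segment_subset ?_
  rintro _ ⟨u, v, _, _, huv, rfl⟩ σ hσ t
  obtain ⟨k, hk, hki⟩ := Finset.exists_mem_ne (hK.trans (rmin_le_card hσ)) i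
  have hseg : (u • a + v • b) k = a k := by
    rw [Pi.add_apply, Pi.smul_apply, Pi.smul_apply, hab k hki, ← add_smul, huv, one_smul]
  exact ⟨k, hk, hseg ▸ ha k hki t⟩

lemma joinedIn_polSp_of_mem_rootFree (hK : 2 ≤ rmin K) (hE : ∅ ∈ K) (ha : a ∈ rootFree D)
    (hb : b ∈ rootFree D) : JoinedIn (PolSp K D) a b := by
  suffices h : ∀ S : Finset (Fin r), JoinedIn (PolSp K D) a (S.piecewise b a) by
    simpa using h Finset.univ
  intro S
  induction S using Finset.induction_on with
  | empty => simpa using JoinedIn.refl (rootFree_subset_polSp hE ha)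
  | insert i S _ ih =>
    refine ih.trans (joinedIn_polSp_of_eq_off hK i (fun k _ => ?_) fun k hk => ?_)
    · by_cases h : k ∈ S
      · simpa [h] using hb k
      · simpa [h] using ha k
    · rw [Finset.piecewise_insert_of_ne _ _ _ hk]

lemma isPathConnected_polSp (hK : 2 ≤ rmin K) (hE : ∅ ∈ K) (hD : ∀ k, 0 < D k) :
    IsPathConnected (PolSp K D) := by
  obtain ⟨s, hs⟩ := (eventually_add_smul_constI_mem_rootFree hD 0).exists
  refine ⟨_, rootFree_subset_polSp hE hs, fun {_} ha => ?_⟩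
  obtain ⟨b, hb, hab⟩ := exists_mem_rootFree_joinedIn hD hE ha
  exact (joinedIn_polSp_of_mem_rootFree hK hE hs hb).trans hab.symm

end Connectedness

/-! ### Comparison of lifts -/

section Lifts

open unitInterval Real OnePoint

lemma exists_angle_reparametrization :
    ∃ (φ : C(I, ℝ)) (ψ : C(ℝ, I)), φ 0 = -(π / 2) ∧ φ 1 = π / 2 ∧ ψ (-(π / 2)) = 0 ∧
      ψ (π / 2) = 1 ∧ ∀ θ ∈ Set.Icc (-(π / 2)) (π / 2), φ (ψ θ) = θ := by
  have hle : -(π / 2) < π / 2 := by linarith [pi_pos]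
  let e := iccHomeoI (-(π / 2)) (π / 2) hle
  have he₀ : e ⟨-(π / 2), Set.left_mem_Icc.2 hle.le⟩ = 0 := Subtype.ext (by simp [e])
  have he₁ : e ⟨π / 2, Set.right_mem_Icc.2 hle.le⟩ = 1 := Subtype.ext (by simp [e])
  refine ⟨⟨fun s => e.symm s, continuous_subtype_val.comp e.symm.continuous⟩,
    ⟨fun θ => e (Set.projIcc (-(π / 2)) (π / 2) hle.le θ), e.continuous.comp continuous_projIcc⟩,
    ?_, ?_, ?_, ?_, fun θ hθ => ?_⟩
  · exact congrArg Subtype.val (e.symm_apply_eq.2 he₀.symm)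
  · exact congrArg Subtype.val (e.symm_apply_eq.2 he₁.symm)
  · rw [ContinuousMap.coe_mk, Set.projIcc_left, he₀]
  · rw [ContinuousMap.coe_mk, Set.projIcc_right, he₁]
  · simp only [ContinuousMap.coe_mk, e.symm_apply_apply, Set.projIcc_of_mem _ hθ]

lemma exists_lift_of_isCoveringMap {A B E : Type*} [TopologicalSpace A] [PreconnectedSpace A]
    [TopologicalSpace B] [TopologicalSpace E] {p : E → B} (hp : IsCoveringMap p)
    (ν : C(A × OnePoint ℝ, B)) {a₀ : A} {e : E} (hν : ∀ a, ν (a, ∞) = p e)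
    (hν₀ : ∀ t, ν (a₀, t) = p e) :
    ∃ L : C(A × OnePoint ℝ, E), (∀ z, p (L z) = ν z) ∧ (∀ a, L (a, ∞) = e) ∧
      ∀ t, L (a₀, t) = e := by
  obtain ⟨φ, ψ, hφ₀, hφ₁, hψ₀, hψ₁, hφψ⟩ := exists_angle_reparametrization
  let H : (ContinuousMap.const A (p e)).HomotopyRel (.const A (p e)) {a₀} :=
    { toFun := fun z => ν (z.2, angleToCircle (φ z.1))
      continuous_toFun := ν.continuous.comp <| continuous_snd.prodMk <|
        continuous_angleToCircle.comp <| φ.continuous.comp continuous_fst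
      map_zero_left := fun a => by simp [hφ₀, angleToCircle_neg_pi_div_two, hν]
      map_one_left := fun a => by simp [hφ₁, angleToCircle_pi_div_two, hν]
      prop' := by
        rintro s _ rfl
        exact hν₀ _ }
  let M : (ContinuousMap.const A e).HomotopyRel (.const A e) {a₀} :=
    hp.liftHomotopyRel H ⟨a₀, rfl, rfl⟩ rfl rfl
  have hM : p ∘ M = H := hp.liftHomotopy_lifts H.toContinuousMap (.const A e) H.apply_zero
  refine ⟨⟨fun z => M (ψ (circleToAngle z.2), z.1), continuous_prod_circle_iff.2 ?_⟩,
    fun z => ?_, fun a => ?_, fun t => M.eq_fst _ rfl⟩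
  · have hdesc (z : A × Set.Icc (-(π / 2)) (π / 2)) :
        M (ψ (circleToAngle (angleToCircle z.2)), z.1) = M (ψ z.2, z.1) :=
      apply_circleToAngle_angleToCircle (g := fun θ => M (ψ θ, z.1)) (by simp [hψ₀, hψ₁]) z.2.2
    simp only [hdesc]
    fun_prop
  · refine (congrFun hM _).trans ?_
    change ν _ = ν _
    rw [hφψ _ (circleToAngle_mem z.2), angleToCircle_circleToAngle]
  · rw [ContinuousMap.coe_mk, circleToAngle_infty, hψ₁]
    exact M.apply_one a

variable {n r : ℕ} {N : Fin r → Fin n → ℤ} {K : Set (Finset (Fin r))} {hE : ∅ ∈ K}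
  {X : Type*} [TopologicalSpace X]

/-- A continuous family, parametrized by `X`, of loops in the torus `(ℂ*)^r` based at
`(1, …, 1)`. -/
structure TorusFamily (c : X × OnePoint ℝ → Fin r → ℂ) : Prop where
  continuous : Continuous c
  ne_zero : ∀ z k, c z k ≠ 0
  eq_one : ∀ x k, c (x, ∞) k = 1

namespace TorusFamily

variable {c : X × OnePoint ℝ → Fin r → ℂ}

/-- The pointwise product of a family of loops in the torus with a family of loops in `U(K)`. -/
def act (hc : TorusFamily c) (γ : C(X, Loop (UK K) (onesUK hE))) : C(X, Loop (UK K) (onesUK hE)) :=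
  Loop.curry
    ⟨fun z => ⟨fun k => c z k * ((γ z.1).1 z.2).1 k, mul_mem_UK ((γ z.1).1 z.2).2 (hc.ne_zero z)⟩,
      (hc.continuous.mul (Loop.continuous_coe_eval γ)).subtype_mk _⟩
    fun x => Subtype.ext <| funext fun k =>
      show c (x, ∞) k * ((γ x).1 ∞).1 k = 1 by rw [hc.eq_one, Loop.eval_infty, one_mul]

lemma act_apply (hc : TorusFamily c) (γ : C(X, Loop (UK K) (onesUK hE))) (x : X) (p : OnePoint ℝ)
    (k : Fin r) : ((hc.act γ x).1 p).1 k = c (x, p) k * ((γ x).1 p).1 k := rfl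

lemma comp (hc : TorusFamily c) {Y : Type*} [TopologicalSpace Y] {f : Y → X}
    (hf : Continuous f) : TorusFamily fun z : Y × OnePoint ℝ => c (f z.1, z.2) where
  continuous := hc.continuous.comp (hf.prodMap continuous_id)
  ne_zero _ := hc.ne_zero _
  eq_one _ := hc.eq_one _

lemma inv (hc : TorusFamily c) : TorusFamily c⁻¹ where
  continuous := continuous_pi fun k =>
    ((continuous_apply k).comp hc.continuous).inv₀ fun z => hc.ne_zero z k
  ne_zero z k := inv_ne_zero (hc.ne_zero z k)
  eq_one x k := by simp [hc.eq_one]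

lemma mul (hc : TorusFamily c) {c' : X × OnePoint ℝ → Fin r → ℂ} (hc' : TorusFamily c') :
    TorusFamily (c * c') where
  continuous := hc.continuous.mul hc'.continuous
  ne_zero z k := mul_ne_zero (hc.ne_zero z k) (hc'.ne_zero z k)
  eq_one x k := by simp [hc.eq_one, hc'.eq_one]

/-- The self-homeomorphism of the loop space given by multiplication with the member of a family of
loops in the torus at a given parameter. -/
def homeomorph (hc : TorusFamily c) (x : X) :
    Loop (UK K) (onesUK hE) ≃ₜ Loop (UK K) (onesUK hE) where
  toFun := (hc.comp continuous_const (f := fun _ => x)).act (.id _)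
  invFun := (hc.inv.comp continuous_const (f := fun _ => x)).act (.id _)
  left_inv γ := Loop.ext_apply fun p k => by
    simp [act_apply, hc.ne_zero]
  right_inv γ := Loop.ext_apply fun p k => by
    simp [act_apply, hc.ne_zero]

-- The family lifts through the exponential; scaling its logarithm contracts it.
lemma act_homotopicRel [PreconnectedSpace X] (hc : TorusFamily c) {x₀ : X}
    (hc₀ : ∀ p k, c (x₀, p) k = 1) (γ : C(X, Loop (UK K) (onesUK hE))) :
    (hc.act γ).HomotopicRel γ {x₀} := by
  have hlog (k : Fin r) : ∃ L : C(X × OnePoint ℝ, ℂ), (∀ z, Complex.exp (L z) = c z k) ∧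
      (∀ x, L (x, ∞) = 0) ∧ ∀ p, L (x₀, p) = 0 := by
    obtain ⟨L, hL, hL₀⟩ := exists_lift_of_isCoveringMap Complex.isCoveringMap_exp
      (a₀ := x₀) (e := 0)
      ⟨fun z => ⟨c z k, hc.ne_zero z k⟩,
        ((continuous_apply k).comp hc.continuous).subtype_mk _⟩
      (fun x => Subtype.ext (by simp [hc.eq_one])) (fun p => Subtype.ext (by simp [hc₀]))
    exact ⟨L, fun z => congrArg Subtype.val (hL z), hL₀⟩
  choose L hL hL_infty hL₀ using hlog
  have hexp : TorusFamily fun (z : (I × X) × OnePoint ℝ) k =>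
      Complex.exp ((1 - z.1.1 : ℝ) * L k (z.1.2, z.2)) :=
    ⟨by fun_prop, fun _ _ => Complex.exp_ne_zero _, fun x k => by simp [hL_infty]⟩
  refine ⟨⟨⟨hexp.act (γ.comp .snd), fun x => ?_, fun x => ?_⟩, ?_⟩⟩
  · exact Loop.ext_apply fun p k => by simp [act_apply, hL]
  · exact Loop.ext_apply fun p k => by simp [act_apply]
  · rintro s _ rfl
    refine Loop.ext_apply fun p k => ?_
    simp [act_apply, hL₀, hc₀]

lemma exists_homeomorph_act_homotopicRel [PreconnectedSpace X] (hc : TorusFamily c) (x₀ : X)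
    (γ : C(X, Loop (UK K) (onesUK hE))) : ∃ T : Loop (UK K) (onesUK hE) ≃ₜ Loop (UK K) (onesUK hE),
      (hc.act γ).HomotopicRel ((T : C(_, _)).comp γ) {x₀} := by
  let T : Loop (UK K) (onesUK hE) ≃ₜ Loop (UK K) (onesUK hE) := hc.homeomorph x₀
  have hν := (hc.inv.comp (continuous_const (y := x₀) : Continuous fun _ : X => x₀)).mul hc
  have hact : hν.act ((T : C(_, _)).comp γ) = hc.act γ := by
    refine ContinuousMap.ext fun x => Loop.ext_apply fun p k => ?_
    have hT : ((T (γ x)).1 p).1 k = c (x₀, p) k * ((γ x).1 p).1 k := rfl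
    have hne := hc.ne_zero (x₀, p) k
    simp only [act_apply, ContinuousMap.comp_apply, ContinuousMap.coe_coe, hT, Pi.mul_apply,
      Pi.inv_apply]
    field_simp
  exact ⟨T, hact ▸ hν.act_homotopicRel (fun p k => inv_mul_cancel₀ (hc.ne_zero _ k)) _⟩

end TorusFamily

lemma exists_torusFamily_act_eq (hN : IsUnimodularOn N K) {j j' : C(X, Loop (UK K) (onesUK hE))}
    (hjj' : ∀ x (t : ℝ), qmap N K ((j' x).1 t) = qmap N K ((j x).1 t)) :
    ∃ (μ : X × OnePoint ℝ → Fin r → ℂ) (hμ : TorusFamily μ), hμ.act j' = j := by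
  have hex : ∀ z : X × OnePoint ℝ, ∃ μ ∈ GSet N, μ * ((j' z.1).1 z.2).1 = ((j z.1).1 z.2).1 := by
    rintro ⟨x, p⟩
    induction p with
    | infty => exact ⟨1, GSet.one_mem, by rw [one_mul, (j x).2, (j' x).2]⟩
    | coe t => exact qmap_eq_iff.1 (hjj' x t)
  choose μ hμG hμ using hex
  refine ⟨μ, ⟨continuous_of_mul_eq hN (Loop.continuous_coe_eval j') (Loop.continuous_coe_eval j)
    (fun z => ((j' z.1).1 z.2).2) hμG hμ, fun z => (hμG z).1, fun x k => ?_⟩,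
    ContinuousMap.ext fun x => ?_⟩
  · simpa [Loop.eval_infty] using congrFun (hμ (x, ∞)) k
  · exact Loop.ext_apply fun p k => congrFun (hμ (x, p)) k

end Lifts

/-! ### The equivalence in a range of dimensions -/

section Main

variable {n r : ℕ} {N : Fin r → Fin n → ℤ} {K : Set (Finset (Fin r))} {D : Fin r → ℕ}

lemma lt_of_le_dBound {k : ℕ} (hk : (k : ℤ) ≤ dBound K D) :
    2 ≤ rmin K ∧ 0 < dmin D ∧ k + 1 < dmin D * (2 * rmin K - 2) := by
  have hpos : (0 : ℤ) < (rmin K - 1) * dmin D := by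
    unfold dBound at hk
    linarith [Int.natCast_nonneg k]
  have hd : (0 : ℤ) < dmin D := (Int.natCast_nonneg _).lt_of_ne fun h => by simp [← h] at hpos
  have hK : (0 : ℤ) < rmin K - 1 := pos_of_mul_pos_left hpos hd.le
  refine ⟨by lia, mod_cast hd, ?_⟩
  zify [show 2 ≤ 2 * rmin K by lia]
  unfold dBound at hk
  linarith

theorem polSpace_lift_exists_and_homotopyEquiv_through_general
    (hE : ∅ ∈ K) (hN : IsUnimodularOn N K) (hsum : ∑ k, (D k : ℤ) • N k = 0) :
    (∃ j : C(PolSp K D, Loop (UK K) (onesUK hE)), IsLiftOfID N K hE D j) ∧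
      ∀ j : C(PolSp K D, Loop (UK K) (onesUK hE)), IsLiftOfID N K hE D j →
        HomotopyEquivThrough j (dBound K D) := by
  have hstd := isLiftOfID_standardLift hE hsum
  refine ⟨⟨standardLift hE D, hstd⟩, fun j hj f k hk => ?_⟩
  obtain ⟨hK, hd, hdim⟩ := lt_of_le_dBound hk
  have hconn := isPathConnected_polSp hK hE fun i => hd.trans_le (dmin_le D i)
  have := isPreconnected_iff_preconnectedSpace.1 hconn.isConnected.isPreconnected
  obtain ⟨μ, hμ, rfl⟩ := exists_torusFamily_act_eq hN fun x t => (hstd x t).trans (hj x t).symm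
  obtain ⟨T, hT⟩ := hμ.exists_homeomorph_act_homotopicRel f (standardLift hE D)
  have hbij : BijectiveOnCubes (Fin k) (standardLift hE D) f :=
    CompressesInto.bijectiveOnCubes (isEmbedding_standardLift hE).injective
      (compressesInto_standardLift hK hE (by simp; lia))
      (compressesInto_standardLift hK hE (by simp; lia)) f
  exact ((hbij.homeomorph_comp T).of_homotopicRel hT).bijective_piMap

end Main

/-- Let `Σ` be a non-singular fan in `ℝ^n` satisfying conditions (2.9.1)
and (2.9.2), and let `D` be an `r`-tuple of positive integers with `∑ d_k n_k = 0`.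
Then the map `i_D : Pol*_D(S¹, X_Σ) → Ω X_Σ` admits a continuous lift
`j_D : Pol*_D(S¹, X_Σ) → Ω U(K_Σ)` with `(Ω q_Σ) ∘ j_D = i_D`, and every such lift is a
homotopy equivalence through dimension `d(D,Σ) = 2(r_min(Σ) − 1) d_min − 2`. -/
theorem polSpace_lift_exists_and_homotopyEquiv_through
    {n r : ℕ} (F : Fan n) (N : Fin r → Fin n → ℤ)
    (hPG : IsPrimGens F N) (hNS : F.NonSingular)
    (h1 : Cond1 N) (h2 : Cond2 N)
    (D : Fin r → ℕ) (hD : ∀ k, 0 < D k)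
    (hsum : ∑ k, (D k : ℤ) • N k = 0) :
    (∃ j : C(↥(PolSp (KC F N) D), Loop ↥(UK (KC F N)) (onesUK (empty_mem_KC F N))),
        IsLiftOfID N (KC F N) (empty_mem_KC F N) D ⇑j) ∧
      ∀ j : C(↥(PolSp (KC F N) D), Loop ↥(UK (KC F N)) (onesUK (empty_mem_KC F N))),
        IsLiftOfID N (KC F N) (empty_mem_KC F N) D ⇑j →
          HomotopyEquivThrough j (dBound (KC F N) D) :=
  polSpace_lift_exists_and_homotopyEquiv_through_general (empty_mem_KC F N)
    (isUnimodularOn_KC hPG hNS) hsum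

end Toric
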